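/- Let s ∈ (0,1) and R > 0. There is a constant C = C(s,R) such that the following holds. Let q₁, q₂ : ℂ → ℂ be Schwartz functions with ‖q₁‖_{H^{s,s}} ≤ R and ‖q₂‖_{H^{s,s}} ≤ R, and for j = 1,2 and each k ∈ ℂ let (u₁^{(j)}(·,k), u₂^{(j)}(·,k)) be the bounded continuous scattering solutions for the potential q_j, and define 𝓕[q_j](k) = (i/(2π)) ∫_ℂ e_{−k}(z) q_j(z) conj(u₁^{(j)}(z,k)) dA(z). Then ‖𝓕[q₂] − 𝓕[q₁]‖_{L²(ℂ)} ≤ C ‖q₂ − q₁‖_{H^{s,s}}. -/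

import Mathlib

open MeasureTheory Complex ComplexConjugate Filter Bornology
open scoped ENNReal Topology SchwartzMap

noncomputable section

/-- `e_k(z) = exp(i(conj k · z + k · conj z)/2)`. -/
def ek (k z : ℂ) : ℂ := Complex.exp (Complex.I * (conj k * z + k * conj z) / 2)

/-- The solid Cauchy transform `∂̄⁻¹[h](z) = (1/π) ∫ h(w)/(z-w) dA(w)`. -/
def dbarInv (h : ℂ → ℂ) (z : ℂ) : ℂ := (Real.pi : ℂ)⁻¹ * ∫ w : ℂ, h w / (z - w)

/-- The solid Cauchy transform `∂_z⁻¹[h](z) = (1/π) ∫ h(w)/(conj z - conj w) dA(w)`. -/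
def dzInv (h : ℂ → ℂ) (z : ℂ) : ℂ := (Real.pi : ℂ)⁻¹ * ∫ w : ℂ, h w / (conj z - conj w)

/-- The operator `S^k_q[F] = ∂̄⁻¹[e_{-k} q ∂_z⁻¹[e_k conj(q) F]]`. -/
def Sk (k : ℂ) (q F : ℂ → ℂ) : ℂ → ℂ :=
  dbarInv fun z => ek (-k) z * q z * dzInv (fun w => ek k w * conj (q w) * F w) z

/-- The Fourier transform on `ℂ ≅ ℝ²`. -/
def FT (f : ℂ → ℂ) (ξ : ℂ) : ℂ :=
  ∫ z : ℂ, Complex.exp (-(2 * Real.pi * Complex.I) * ((z.re * ξ.re + z.im * ξ.im : ℝ) : ℂ)) * f z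

/-- The inverse Fourier transform on `ℂ ≅ ℝ²`. -/
def FTinv (f : ℂ → ℂ) (x : ℂ) : ℂ :=
  ∫ ξ : ℂ, Complex.exp ((2 * Real.pi * Complex.I) * ((x.re * ξ.re + x.im * ξ.im : ℝ) : ℂ)) * f ξ

/-- `D^s`, the Fourier multiplier with symbol `|ξ|^s`. -/
def Ds (s : ℝ) (f : ℂ → ℂ) : ℂ → ℂ :=
  FTinv fun ξ => ((‖ξ‖ ^ s : ℝ) : ℂ) * FT f ξ

/-- The weighted Sobolev norm
`‖q‖_{H^{s,s}} = max {‖q‖₂, ‖D^s q‖₂, ‖|·|^s q‖₂}`, where by Plancherel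
`‖D^s q‖₂ = ‖ |ξ|^s (FT q)(ξ) ‖₂`. -/
def HssNorm (s : ℝ) (q : ℂ → ℂ) : ℝ≥0∞ :=
  max (eLpNorm q 2 volume)
    (max (eLpNorm (fun ξ : ℂ => ((‖ξ‖ ^ s : ℝ) : ℂ) * FT q ξ) 2 volume)
      (eLpNorm (fun z : ℂ => ((‖z‖ ^ s : ℝ) : ℂ) * q z) 2 volume))

/-- The Cauchy–Riemann operator `∂̄ = (∂/∂z₁ + i ∂/∂z₂)/2`. -/
def dbar (G : ℂ → ℂ) (z : ℂ) : ℂ := (fderiv ℝ G z 1 + Complex.I * fderiv ℝ G z Complex.I) / 2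

end

/-- `(u₁, u₂)` is a (bounded continuous) solution of the integral equations
`u₁ = 1 + ∂̄⁻¹[e_{-k} q conj u₂]`, `u₂ = ∂̄⁻¹[e_{-k} q conj u₁]`. -/
def IsScattering (q : ℂ → ℂ) (k : ℂ) (u₁ u₂ : ℂ → ℂ) : Prop :=
  Continuous u₁ ∧ IsBounded (Set.range u₁) ∧ Continuous u₂ ∧ IsBounded (Set.range u₂) ∧
  (∀ z : ℂ, u₁ z = 1 + dbarInv (fun w => ek (-k) w * q w * conj (u₂ w)) z) ∧
  (∀ z : ℂ, u₂ z = dbarInv (fun w => ek (-k) w * q w * conj (u₁ w)) z)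

/-- The scattering transform
`𝓕[q](k) = (i/(2π)) ∫ e_{-k}(z) q(z) conj(u₁(z,k)) dA(z)`. -/
noncomputable def scatTransform (q : ℂ → ℂ) (u₁ : ℂ → ℂ → ℂ) (k : ℂ) : ℂ :=
  Complex.I / (2 * (Real.pi : ℂ)) * ∫ z : ℂ, ek (-k) z * q z * conj (u₁ z k)

/-!
The functions `u₁ - 1 ± u₂` decouple the system: each solves `m = ∂̄⁻¹[b (1 + conj m)]` with
`b = ± e_{-k} q`. By the similarity principle an integrating factor removes the zeroth order term,
so `m` is controlled in `L²(ρ dA)`, for any weight `ρ ≥ |q|` with bounded Cauchy potential, by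
`∂̄⁻¹ b` alone, uniformly in `k`. Since `∂̄⁻¹` is antisymmetric, the scattering transform is the
Fourier transform of `q` plus a pairing of `b ∂̄⁻¹[conj b]` with `m`. The difference quotient of
this pairing in the direction `p = (q₂ - q₁) / D` is at most a constant times `S(k)²`, where `S(k)`
is the largest norm in `L²(ρ dA)` of the Cauchy transforms of `e_{-k} q₁`, `e_{-k} q₂`, `e_{-k} p`
and their conjugates. For the linear part use Plancherel in `k`. For the quadratic part, squaring
first and then using Plancherel in `k` bounds `∫ S(k)⁴ dA(k)` by norms of the potentials in `L²`
and the potentials of `ρ = |q₁| + |q₂| + |p|` of orders `1 ± s/2`. The latter are bounded by the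
norm of `H^{s,s}`: the smoothness controls the local part of the integral and the weight at
infinity the rest.
-/

noncomputable section

open scoped NNReal

/-! ### Plancherel's inequality for Fourier integrals -/

section Plancherel

open FourierTransform

variable {V E : Type*} [NormedAddCommGroup V] [InnerProductSpace ℝ V] [FiniteDimensional ℝ V]
  [MeasurableSpace V] [BorelSpace V] [NormedAddCommGroup E] [InnerProductSpace ℂ E]
  {f : V → E}

theorem continuous_fourier (hf : Integrable f) : Continuous (𝓕 f) :=
  VectorFourier.fourierIntegral_continuous Real.continuous_fourierChar
    (innerSL ℝ).continuous₂ hf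

variable [CompleteSpace E]

-- Both sides have the same pairings with Schwartz functions, by self-adjointness of `𝓕`.
theorem coeFn_fourier_toLp_ae_eq (hf : Integrable f) (hf2 : MemLp f 2) :
    (𝓕 (hf2.toLp f) : Lp E 2 (volume : Measure V)) =ᵐ[volume] 𝓕 f := by
  refine ae_eq_of_integral_contDiff_smul_eq
    ((Lp.memLp (𝓕 (hf2.toLp f))).locallyIntegrable (by norm_num))
    (continuous_fourier hf).locallyIntegrable fun g hg hgc ↦ ?_
  let G : 𝓢(V, ℂ) := (hgc.comp_left (g := fun x : ℝ ↦ (x : ℂ)) rfl).toSchwartzMap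
    (ofRealCLM.contDiff.comp hg)
  have hG (x : V) (y : E) : g x • y = G x • y := (coe_smul (g x) y).symm
  have pairing := congrArg (fun T ↦ T G) (Lp.fourier_toTemperedDistribution_eq (hf2.toLp f))
  simp only [TemperedDistribution.fourier_apply, Lp.toTemperedDistribution_apply] at pairing
  have selfAdjoint := VectorFourier.integral_fourierIntegral_smul_eq_flip
    (μ := (volume : Measure V)) (ν := (volume : Measure V)) (L := innerₗ V)
    Real.continuous_fourierChar (innerSL ℝ).continuous₂ G.integrable hf
  rw [flip_innerₗ] at selfAdjoint
  simp_rw [hG]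
  calc ∫ x, G x • (𝓕 (hf2.toLp f) : Lp E 2 (volume : Measure V)) x
      = ∫ x, (𝓕 G) x • hf2.toLp f x := pairing.symm
    _ = ∫ x, 𝓕 (G : V → ℂ) x • f x := by
      refine integral_congr_ae ?_
      filter_upwards [hf2.coeFn_toLp] with x hx
      rw [hx, SchwartzMap.fourier_coe]
    _ = ∫ x, G x • 𝓕 f x := selfAdjoint

theorem eLpNorm_fourier_le (hf : Integrable f) : eLpNorm (𝓕 f) 2 volume ≤ eLpNorm f 2 volume := by
  by_cases hf2 : MemLp f 2
  · rw [← eLpNorm_congr_ae (coeFn_fourier_toLp_ae_eq hf hf2), ← eLpNorm_congr_ae hf2.coeFn_toLp,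
      ← Lp.enorm_def, ← Lp.enorm_def, enorm_le_iff_norm_le, Lp.norm_fourier_eq]
  · rw [not_lt_top_iff.1 fun h ↦ hf2 ⟨hf.1, h⟩]
    exact le_top

theorem eLpNorm_two_sq {α F : Type*} [MeasurableSpace α] [ENorm F] (μ : Measure α) (f : α → F) :
    eLpNorm f 2 μ ^ 2 = ∫⁻ x, ‖f x‖ₑ ^ 2 ∂μ := by
  simpa using eLpNorm_nnreal_pow_eq_lintegral (p := 2) (f := f) (μ := μ) two_ne_zero

theorem lintegral_enorm_fourier_sq_le (hf : Integrable f) :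
    ∫⁻ ξ, ‖𝓕 f ξ‖ₑ ^ 2 ≤ ∫⁻ x, ‖f x‖ₑ ^ 2 := by
  rw [← eLpNorm_two_sq, ← eLpNorm_two_sq]
  exact pow_le_pow_left' (eLpNorm_fourier_le hf) 2

end Plancherel

theorem continuous_ek : Continuous fun p : ℂ × ℂ ↦ ek p.1 p.2 := by
  unfold ek
  fun_prop

theorem continuous_ek_apply (k : ℂ) : Continuous (ek k) := by
  unfold ek
  fun_prop

theorem ek_eq_exp_inner (k z : ℂ) : ek k z = cexp ((inner ℝ z k : ℝ) * I) := by
  unfold ek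
  congr 1
  rw [Complex.inner]
  apply Complex.ext
  · simp; ring
  · simp

theorem norm_ek (k z : ℂ) : ‖ek k z‖ = 1 := by
  rw [ek_eq_exp_inner, norm_exp_ofReal_mul_I]

theorem enorm_ek (k z : ℂ) : ‖ek k z‖ₑ = 1 := by
  rw [← ofReal_norm, norm_ek, ENNReal.ofReal_one]

theorem conj_ek (k z : ℂ) : conj (ek k z) = ek (-k) z := by
  rw [ek_eq_exp_inner, ek_eq_exp_inner, ← exp_conj, map_mul, conj_ofReal, conj_I, inner_neg_right,
    ofReal_neg, neg_mul, mul_neg]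

theorem lintegral_comp_smul {V : Type*} [NormedAddCommGroup V] [NormedSpace ℝ V]
    [FiniteDimensional ℝ V] [MeasurableSpace V] [BorelSpace V] (μ : Measure V) [μ.IsAddHaarMeasure]
    (f : V → ℝ≥0∞) {r : ℝ} (hr : r ≠ 0) :
    ∫⁻ x, f (r • x) ∂μ = ENNReal.ofReal |(r ^ Module.finrank ℝ V)⁻¹| * ∫⁻ x, f x ∂μ := by
  rw [← smul_eq_mul, ← lintegral_smul_measure, ← Measure.map_addHaar_smul _ hr,
    (measurableEmbedding_const_smul₀ hr).lintegral_map f]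

section FourierIntegral

open FourierTransform Convolution

variable {f g : ℂ → ℂ}

theorem integral_ek_mul_eq_fourier (k : ℂ) (f : ℂ → ℂ) :
    ∫ x, ek (-k) x * f x = 𝓕 f ((2 * Real.pi)⁻¹ • k) := by
  rw [Real.fourier_eq']
  congr 1
  ext x
  rw [ek_eq_exp_inner, smul_eq_mul, inner_smul_right, inner_neg_right]
  congr 4
  field_simp

theorem lintegral_enorm_integral_ek_sq_le (hf : Integrable f) :
    ∫⁻ k, ‖∫ x, ek (-k) x * f x‖ₑ ^ 2 ≤ ENNReal.ofReal ((2 * Real.pi) ^ 2) * ∫⁻ x, ‖f x‖ₑ ^ 2 := by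
  simp_rw [integral_ek_mul_eq_fourier]
  rw [lintegral_comp_smul volume (fun ξ ↦ ‖𝓕 f ξ‖ₑ ^ 2) (by positivity), finrank_real_complex,
    ← inv_pow, inv_inv, abs_of_nonneg (by positivity)]
  exact mul_le_mul_right (lintegral_enorm_fourier_sq_le hf) _

theorem lintegral_enorm_integral_ek_sq_mul_le (hf : Integrable f) (hg : Integrable g) :
    ∫⁻ k, ‖∫ x, ek (-k) x * f x‖ₑ ^ 2 * ‖∫ x, ek (-k) x * g x‖ₑ ^ 2 ≤
      ENNReal.ofReal ((2 * Real.pi) ^ 2) * ∫⁻ x, (∫⁻ v, ‖f v‖ₑ * ‖g (x - v)‖ₑ) ^ 2 := by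
  calc ∫⁻ k, ‖∫ x, ek (-k) x * f x‖ₑ ^ 2 * ‖∫ x, ek (-k) x * g x‖ₑ ^ 2
      = ∫⁻ k, ‖∫ x, ek (-k) x * (f ⋆[ContinuousLinearMap.mul ℂ ℂ] g) x‖ₑ ^ 2 := by
        simp_rw [integral_ek_mul_eq_fourier, Real.fourier_mul_convolution_eq hf hg, enorm_mul,
          mul_pow]
    _ ≤ ENNReal.ofReal ((2 * Real.pi) ^ 2)
          * ∫⁻ x, ‖(f ⋆[ContinuousLinearMap.mul ℂ ℂ] g) x‖ₑ ^ 2 :=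
        lintegral_enorm_integral_ek_sq_le (hf.integrable_convolution _ hg)
    _ ≤ _ := by
        gcongr with x
        refine (enorm_integral_le_lintegral_enorm _).trans_eq (lintegral_congr fun v ↦ ?_)
        rw [ContinuousLinearMap.mul_apply', enorm_mul]

theorem FT_eq_fourier (f : ℂ → ℂ) : FT f = 𝓕 f := by
  ext ξ
  rw [Real.fourier_eq', FT]
  congr 1
  ext z
  rw [smul_eq_mul, Complex.inner]
  congr 2
  push_cast
  simp only [mul_re, conj_re, conj_im, ofReal_sub, ofReal_mul, ofReal_neg]
  ring

theorem FTinv_eq_fourierInv (f : ℂ → ℂ) : FTinv f = 𝓕⁻ f := by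
  ext x
  rw [Real.fourierInv_eq', FTinv]
  congr 1
  ext z
  rw [smul_eq_mul, Complex.inner]
  congr 2
  push_cast
  simp only [mul_re, conj_re, conj_im, ofReal_sub, ofReal_mul, ofReal_neg]
  ring

theorem lintegral_enorm_FTinv_sq_le (hf : Integrable f) :
    ∫⁻ x, ‖FTinv f x‖ₑ ^ 2 ≤ ∫⁻ ξ, ‖f ξ‖ₑ ^ 2 := by
  simp_rw [FTinv_eq_fourierInv, Real.fourierInv_eq_fourier_neg]
  rw [(Measure.measurePreserving_neg volume).lintegral_comp_emb
    (MeasurableEquiv.neg ℂ).measurableEmbedding fun x ↦ ‖𝓕 f x‖ₑ ^ 2]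
  exact lintegral_enorm_fourier_sq_le hf

/-- The functions to which the Fourier inversion formula applies pointwise. -/
structure FourierInvertible (q : ℂ → ℂ) : Prop where
  continuous : Continuous q
  integrable : Integrable q
  integrable_FT : Integrable (FT q)

namespace FourierInvertible

variable {q p : ℂ → ℂ}

theorem of_schwartzMap (q : 𝓢(ℂ, ℂ)) : FourierInvertible q where
  continuous := q.continuous
  integrable := q.integrable
  integrable_FT := by
    rw [FT_eq_fourier, ← SchwartzMap.fourier_coe]
    exact SchwartzMap.integrable _

theorem FTinv_FT (hq : FourierInvertible q) : FTinv (FT q) = q := by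
  rw [FTinv_eq_fourierInv, FT_eq_fourier]
  exact hq.continuous.fourierInv_fourier_eq hq.integrable
    (FT_eq_fourier q ▸ hq.integrable_FT)

theorem continuous_FT (hq : FourierInvertible q) : Continuous (FT q) :=
  FT_eq_fourier q ▸ continuous_fourier hq.integrable

theorem sub (hq : FourierInvertible q) (hp : FourierInvertible p) :
    FourierInvertible fun z ↦ q z - p z where
  continuous := hq.continuous.sub hp.continuous
  integrable := hq.integrable.sub hp.integrable
  integrable_FT := by
    have : FT (fun z ↦ q z - p z) = FT q - FT p := by
      ext ξ
      simp only [FT_eq_fourier, Pi.sub_apply, Real.fourier_eq, smul_sub]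
      exact integral_sub ((Real.fourierIntegral_convergent_iff ξ).2 hq.integrable)
        ((Real.fourierIntegral_convergent_iff ξ).2 hp.integrable)
    rw [this]
    exact hq.integrable_FT.sub hp.integrable_FT

end FourierInvertible

theorem FT_const_mul (c : ℂ) (q : ℂ → ℂ) (ξ : ℂ) : FT (fun z ↦ c * q z) ξ = c * FT q ξ := by
  simp only [FT, mul_left_comm _ c, integral_const_mul]

theorem FourierInvertible.const_mul {q : ℂ → ℂ} (hq : FourierInvertible q) (c : ℂ) :
    FourierInvertible fun z ↦ c * q z where
  continuous := continuous_const.mul hq.continuous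
  integrable := hq.integrable.const_mul c
  integrable_FT :=
    (hq.integrable_FT.const_mul c).congr (.of_forall fun ξ ↦ (FT_const_mul c q ξ).symm)

end FourierIntegral

/-! ### Powers in `ℝ≥0∞` and Cauchy–Schwarz -/

section ExtendedNonnegReal

variable {x y : ℝ≥0∞} {a b : ℝ}

theorem ennreal_add_sq_le (x y : ℝ≥0∞) : (x + y) ^ 2 ≤ 2 * (x ^ 2 + y ^ 2) := by
  have := ENNReal.rpow_add_le_mul_rpow_add_rpow x y one_le_two
  norm_num at this
  exact this

theorem ennreal_mul_le_sq_add_sq (x y : ℝ≥0∞) : x * y ≤ x ^ 2 + y ^ 2 := by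
  rcases le_total x y with h | h
  · calc x * y ≤ y ^ 2 := by rw [sq]; gcongr
      _ ≤ x ^ 2 + y ^ 2 := le_add_self
  · calc x * y ≤ x ^ 2 := by rw [sq]; gcongr
      _ ≤ x ^ 2 + y ^ 2 := le_self_add

theorem ennreal_rpow_le_rpow_of_nonpos (hxy : x ≤ y) (ha : a ≤ 0) : y ^ a ≤ x ^ a := by
  rw [← neg_neg a, ENNReal.rpow_neg, ENNReal.rpow_neg x, ENNReal.inv_le_inv]
  exact ENNReal.rpow_le_rpow hxy (neg_nonneg.2 ha)

theorem ennreal_rpow_sq (x : ℝ≥0∞) (a : ℝ) : (x ^ a) ^ 2 = x ^ (2 * a) := by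
  rw [mul_comm, ENNReal.rpow_mul, ENNReal.rpow_two]

theorem ennreal_rpow_mul_rpow_of_neg (hx : x ≠ ⊤) (ha : a < 0) (hb : b < 0) :
    x ^ a * x ^ b = x ^ (a + b) := by
  rcases eq_or_ne x 0 with rfl | h0
  · rw [ENNReal.zero_rpow_of_neg ha, ENNReal.zero_rpow_of_neg hb,
      ENNReal.zero_rpow_of_neg (add_neg ha hb), ENNReal.top_mul_top]
  · rw [← ENNReal.rpow_add _ _ h0 hx]

theorem ennreal_rpow_mul_rpow_le_add (hx : x ≠ ⊤) (hy : y ≠ ⊤) (ha : a < 0) (hb : b < 0) :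
    x ^ a * y ^ b ≤ x ^ (a + b) + y ^ (a + b) := by
  rcases le_total x y with hxy | hxy
  · calc x ^ a * y ^ b ≤ x ^ a * x ^ b :=
          mul_le_mul_right (ennreal_rpow_le_rpow_of_nonpos hxy hb.le) _
      _ = x ^ (a + b) := ennreal_rpow_mul_rpow_of_neg hx ha hb
      _ ≤ _ := le_self_add
  · calc x ^ a * y ^ b ≤ y ^ a * y ^ b :=
          mul_le_mul_left (ennreal_rpow_le_rpow_of_nonpos hxy ha.le) _
      _ = y ^ (a + b) := ennreal_rpow_mul_rpow_of_neg hy ha hb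
      _ ≤ _ := le_add_self

end ExtendedNonnegReal

section CauchySchwarz

variable {α : Type*} [MeasurableSpace α] {μ : Measure α} {f g : α → ℝ≥0∞}

theorem sq_lintegral_mul_le (hf : AEMeasurable f μ) (hg : AEMeasurable g μ) :
    (∫⁻ x, f x * g x ∂μ) ^ 2 ≤ (∫⁻ x, f x ^ 2 ∂μ) * ∫⁻ x, g x ^ 2 ∂μ := by
  have holder := ENNReal.lintegral_mul_le_Lp_mul_Lq μ Real.HolderConjugate.two_two hf hg
  simp only [Pi.mul_apply, ENNReal.rpow_two] at holder
  calc (∫⁻ x, f x * g x ∂μ) ^ 2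
      ≤ ((∫⁻ x, f x ^ 2 ∂μ) ^ (1 / 2 : ℝ) * (∫⁻ x, g x ^ 2 ∂μ) ^ (1 / 2 : ℝ)) ^ 2 := by gcongr
    _ = _ := by simp [mul_pow, ennreal_rpow_sq]

theorem sq_lintegral_mul_le_weighted (hf : Measurable f) (hg : Measurable g) :
    (∫⁻ x, f x * g x ∂μ) ^ 2 ≤ (∫⁻ x, f x ∂μ) * ∫⁻ x, f x * g x ^ 2 ∂μ := by
  have h := sq_lintegral_mul_le (μ := μ.withDensity f) (f := fun _ ↦ 1) (g := g)
    aemeasurable_const hg.aemeasurable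
  rw [lintegral_withDensity_eq_lintegral_mul _ hf (by fun_prop),
    lintegral_withDensity_eq_lintegral_mul _ hf (by fun_prop),
    lintegral_withDensity_eq_lintegral_mul _ hf (by fun_prop)] at h
  simpa using h

theorem sq_lintegral_le_of_mul_le [SFinite μ] {H : α → α → ℝ≥0∞} (hf : Measurable f)
    (hH : Measurable (Function.uncurry H)) (h : ∀ x y, f x * f y ≤ H x y * H y x) :
    (∫⁻ x, f x ∂μ) ^ 2 ≤ 2 * ∫⁻ x, ∫⁻ y, H x y ^ 2 ∂μ ∂μ := by
  have hH' : Measurable fun p : α × α ↦ H p.1 p.2 := hH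
  calc (∫⁻ x, f x ∂μ) ^ 2 = ∫⁻ x, ∫⁻ y, f x * f y ∂μ ∂μ := by
        rw [sq, ← lintegral_lintegral_mul (by fun_prop) (by fun_prop)]
    _ ≤ ∫⁻ x, ∫⁻ y, (H x y ^ 2 + H y x ^ 2) ∂μ ∂μ := by
        gcongr with x y
        exact (h x y).trans (ennreal_mul_le_sq_add_sq _ _)
    _ = ∫⁻ x, ((∫⁻ y, H x y ^ 2 ∂μ) + ∫⁻ y, H y x ^ 2 ∂μ) ∂μ :=
        lintegral_congr fun x ↦ lintegral_add_left (by fun_prop) _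
    _ = (∫⁻ x, ∫⁻ y, H x y ^ 2 ∂μ ∂μ) + ∫⁻ x, ∫⁻ y, H y x ^ 2 ∂μ ∂μ :=
        lintegral_add_left (by fun_prop) _
    _ = 2 * ∫⁻ x, ∫⁻ y, H x y ^ 2 ∂μ ∂μ := by
        rw [lintegral_lintegral_swap (f := fun x y ↦ H y x ^ 2) (by fun_prop), two_mul]

end CauchySchwarz

/-! ### Riesz kernels -/

section RieszKernel

variable {V : Type*} [NormedAddCommGroup V] {a : ℝ} {r : ℝ≥0∞}

/-- The kernel `‖x‖ ^ (2 * a)` with one of its two factors `‖x‖ ^ a` truncated at radius `r`; it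
dominates products of two Riesz kernels with poles at distance at least `2 * r`. -/
def truncatedRieszKernel (a : ℝ) (r : ℝ≥0∞) (x : V) : ℝ≥0∞ := ‖x‖ₑ ^ a * max ‖x‖ₑ r ^ a

theorem enorm_rpow_mul_enorm_rpow_le_truncatedRieszKernel (ha : a ≤ 0) {x y : V}
    (hr : 2 * r ≤ ‖x‖ₑ + ‖y‖ₑ) :
    ‖x‖ₑ ^ a * ‖y‖ₑ ^ a ≤ truncatedRieszKernel a r x + truncatedRieszKernel a r y := by
  wlog hxy : ‖x‖ₑ ≤ ‖y‖ₑ generalizing x y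
  · rw [mul_comm, add_comm]
    exact this (add_comm ‖x‖ₑ ‖y‖ₑ ▸ hr) (le_of_not_ge hxy)
  have hry : r ≤ ‖y‖ₑ := by
    refine (ENNReal.mul_le_mul_iff_right two_ne_zero ENNReal.ofNat_ne_top).1 (hr.trans ?_)
    rw [two_mul]
    gcongr
  exact (mul_le_mul_right (ennreal_rpow_le_rpow_of_nonpos (max_le hxy hry) ha) _).trans le_self_add

theorem measurable_truncatedRieszKernel [MeasurableSpace V] [BorelSpace V] :
    Measurable (truncatedRieszKernel (V := V) a r) := by
  unfold truncatedRieszKernel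
  fun_prop

variable [NormedSpace ℝ V]

theorem truncatedRieszKernel_smul {r : ℝ} (hr : 0 < r) (x : V) :
    truncatedRieszKernel a (ENNReal.ofReal r) (r • x)
      = ENNReal.ofReal r ^ (2 * a) * truncatedRieszKernel a 1 x := by
  have hr' : ENNReal.ofReal r ≠ 0 := by simpa using hr
  have hmax : max (ENNReal.ofReal r * ‖x‖ₑ) (ENNReal.ofReal r) = ENNReal.ofReal r * max ‖x‖ₑ 1 := by
    rw [mul_max, mul_one]
  unfold truncatedRieszKernel
  rw [enorm_smul, Real.enorm_of_nonneg hr.le, hmax,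
    ENNReal.mul_rpow_of_ne_top (by simp) (by simp),
    ENNReal.mul_rpow_of_ne_top (by simp) (by simp), two_mul, ENNReal.rpow_add _ _ hr' (by simp)]
  ring

variable [MeasurableSpace V] [BorelSpace V] [FiniteDimensional ℝ V] (μ : Measure V)
  [μ.IsAddHaarMeasure]

theorem lintegral_truncatedRieszKernel {r : ℝ} (hr : 0 < r) :
    ∫⁻ x, truncatedRieszKernel a (ENNReal.ofReal r) x ∂μ
      = ENNReal.ofReal r ^ (2 * a + Module.finrank ℝ V) * ∫⁻ x, truncatedRieszKernel a 1 x ∂μ := by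
  have hr' : ENNReal.ofReal r ≠ 0 := by simpa using hr
  have scaling := lintegral_comp_smul μ (truncatedRieszKernel a (ENNReal.ofReal r)) hr.ne'
  simp_rw [truncatedRieszKernel_smul hr] at scaling
  rw [lintegral_const_mul _ measurable_truncatedRieszKernel, abs_of_pos (by positivity),
    ENNReal.ofReal_inv_of_pos (by positivity), ENNReal.ofReal_pow hr.le] at scaling
  rw [ENNReal.rpow_add _ _ hr' (by simp), mul_right_comm, scaling, ENNReal.rpow_natCast,
    mul_right_comm,
    ENNReal.inv_mul_cancel (by positivity) (by finiteness), one_mul]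

theorem lintegral_one_add_enorm_rpow_lt_top (ha : a < -Module.finrank ℝ V) :
    ∫⁻ x : V, (1 + ‖x‖ₑ) ^ a ∂μ < ⊤ := by
  refine (lintegral_congr fun x ↦ ?_).trans_lt
    (finite_integral_one_add_norm (μ := μ) (r := -a) (lt_neg_of_lt_neg ha))
  rw [neg_neg, ← ENNReal.ofReal_rpow_of_pos (by positivity), ENNReal.ofReal_add (by simp) (by simp)]
  simp

theorem lintegral_compl_ball_enorm_rpow_lt_top (ha : a < -Module.finrank ℝ V) :
    ∫⁻ x : V in (Metric.ball 0 1)ᶜ, ‖x‖ₑ ^ a ∂μ < ⊤ := by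
  have ha0 : a ≤ 0 := ha.le.trans (by simp)
  have compare (x : V) (hx : x ∈ (Metric.ball 0 1)ᶜ) : ‖x‖ₑ ^ a ≤ 2 ^ (-a) * (1 + ‖x‖ₑ) ^ a := by
    have hx1 : 1 ≤ ‖x‖ₑ := by
      rw [← ofReal_norm]
      exact ENNReal.one_le_ofReal.2 (by simpa using hx)
    calc ‖x‖ₑ ^ a = 2 ^ (-a) * (2 * ‖x‖ₑ) ^ a := by
          rw [ENNReal.mul_rpow_of_ne_top (by simp) (by simp), ← mul_assoc,
            ← ENNReal.rpow_add _ _ (by simp) (by simp), neg_add_cancel, ENNReal.rpow_zero, one_mul]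
      _ ≤ 2 ^ (-a) * (1 + ‖x‖ₑ) ^ a := by
          refine mul_le_mul_right (ennreal_rpow_le_rpow_of_nonpos ?_ ha0) _
          rw [two_mul]
          gcongr
  calc ∫⁻ x : V in (Metric.ball 0 1)ᶜ, ‖x‖ₑ ^ a ∂μ
      ≤ ∫⁻ x : V in (Metric.ball 0 1)ᶜ, 2 ^ (-a) * (1 + ‖x‖ₑ) ^ a ∂μ :=
        setLIntegral_mono (by fun_prop) compare
    _ ≤ ∫⁻ x : V, 2 ^ (-a) * (1 + ‖x‖ₑ) ^ a ∂μ := setLIntegral_le_lintegral _ _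
    _ = 2 ^ (-a) * ∫⁻ x : V, (1 + ‖x‖ₑ) ^ a ∂μ := lintegral_const_mul _ (by fun_prop)
    _ < ⊤ := ENNReal.mul_lt_top (by finiteness) (lintegral_one_add_enorm_rpow_lt_top μ ha)

variable [Nontrivial V]

theorem lintegral_ball_enorm_rpow_lt_top (ha : -Module.finrank ℝ V < a) :
    ∫⁻ x : V in Metric.ball 0 1, ‖x‖ₑ ^ a ∂μ < ⊤ := by
  have h := (integrableOn_ball_of_norm_le_rpow (μ := μ) (C := 1) (α := -a)
    (r := 1) (f := fun x : V ↦ ‖x‖ ^ a) Module.finrank_pos (neg_lt.1 ha)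
    (Eventually.of_forall fun x ↦ by
      rw [neg_neg, one_mul, Real.norm_of_nonneg (by positivity)])
    (Measurable.aestronglyMeasurable (by fun_prop))).2
  refine (lintegral_congr_ae (ae_restrict_of_ae ?_)).trans_lt h
  filter_upwards [compl_mem_ae_iff.2 (measure_singleton (0 : V))] with x hx
  rw [← ofReal_norm, ENNReal.ofReal_rpow_of_pos (norm_pos_iff.2 hx),
    Real.enorm_of_nonneg (by positivity)]

theorem lintegral_truncatedRieszKernel_one_lt_top (ha : -Module.finrank ℝ V < a)
    (ha' : 2 * a < -Module.finrank ℝ V) : ∫⁻ x : V, truncatedRieszKernel a 1 x ∂μ < ⊤ := by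
  have ha0 : a < 0 := by
    have : (0 : ℝ) ≤ Module.finrank ℝ V := by positivity
    linarith
  unfold truncatedRieszKernel
  rw [← lintegral_add_compl _ (Metric.isOpen_ball (x := (0 : V)) (ε := 1)).measurableSet]
  refine ENNReal.add_lt_top.2 ⟨?_, ?_⟩
  · refine (setLIntegral_mono (by fun_prop) fun x _ ↦ ?_).trans_lt
      (lintegral_ball_enorm_rpow_lt_top μ ha)
    calc ‖x‖ₑ ^ a * max ‖x‖ₑ 1 ^ a ≤ ‖x‖ₑ ^ a * 1 ^ a :=
          mul_le_mul_right (ennreal_rpow_le_rpow_of_nonpos (le_max_right _ _) ha0.le) _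
      _ = ‖x‖ₑ ^ a := by rw [ENNReal.one_rpow, mul_one]
  · refine (setLIntegral_mono (by fun_prop) fun x _ ↦ ?_).trans_lt
      (lintegral_compl_ball_enorm_rpow_lt_top μ ha')
    calc ‖x‖ₑ ^ a * max ‖x‖ₑ 1 ^ a ≤ ‖x‖ₑ ^ a * ‖x‖ₑ ^ a :=
          mul_le_mul_right (ennreal_rpow_le_rpow_of_nonpos (le_max_left _ _) ha0.le) _
      _ = ‖x‖ₑ ^ (2 * a) := by rw [ennreal_rpow_mul_rpow_of_neg (by simp) ha0 ha0, two_mul]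

theorem exists_lintegral_enorm_rpow_mul_enorm_rpow_le (ha : -Module.finrank ℝ V < a)
    (ha' : 2 * a < -Module.finrank ℝ V) :
    ∃ C : ℝ≥0, ∀ x y : V, ∫⁻ z, ‖x - z‖ₑ ^ a * ‖y - z‖ₑ ^ a ∂μ
      ≤ C * ‖x - y‖ₑ ^ (2 * a + Module.finrank ℝ V) := by
  set K := ∫⁻ x : V, truncatedRieszKernel a 1 x ∂μ
  set c := 2 * a + Module.finrank ℝ V with hc
  have hK : K ≠ ⊤ := (lintegral_truncatedRieszKernel_one_lt_top μ ha ha').ne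
  have hc0 : c < 0 := by linarith
  have h2 : (2⁻¹ : ℝ≥0∞) ^ c ≠ ⊤ := by
    rw [ENNReal.inv_rpow, ← ENNReal.rpow_neg]
    finiteness
  refine ⟨(2 * (2⁻¹ ^ c * K) + 1).toNNReal, fun x y ↦ ?_⟩
  rw [ENNReal.coe_toNNReal (by finiteness)]
  rcases eq_or_ne x y with rfl | hxy
  · simp [ENNReal.zero_rpow_of_neg hc0]
  have hr : 0 < 2⁻¹ * ‖x - y‖ := by
    have := norm_pos_iff.2 (sub_ne_zero.2 hxy)
    positivity
  have hr' : ENNReal.ofReal (2⁻¹ * ‖x - y‖) = 2⁻¹ * ‖x - y‖ₑ := by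
    rw [ENNReal.ofReal_mul (by norm_num), ofReal_norm, ENNReal.ofReal_inv_of_pos two_pos,
      ENNReal.ofReal_ofNat]
  have separated (z : V) : 2 * (2⁻¹ * ‖x - y‖ₑ) ≤ ‖x - z‖ₑ + ‖y - z‖ₑ := by
    rw [ENNReal.mul_inv_cancel_left two_ne_zero ENNReal.ofNat_ne_top, ← sub_sub_sub_cancel_right]
    exact enorm_sub_le
  set T := truncatedRieszKernel (V := V) a (2⁻¹ * ‖x - y‖ₑ) with hT
  have hTm : Measurable T := measurable_truncatedRieszKernel
  calc ∫⁻ z, ‖x - z‖ₑ ^ a * ‖y - z‖ₑ ^ a ∂μ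
      ≤ ∫⁻ z, (T (x - z) + T (y - z)) ∂μ := lintegral_mono fun z ↦
        enorm_rpow_mul_enorm_rpow_le_truncatedRieszKernel (by linarith) (separated z)
    _ = 2 * ∫⁻ z, T z ∂μ := by
      rw [lintegral_add_left (by fun_prop), lintegral_sub_left_eq_self T x,
        lintegral_sub_left_eq_self T y, two_mul]
    _ = 2 * (2⁻¹ ^ c * K) * ‖x - y‖ₑ ^ c := by
      rw [hT, ← hr', lintegral_truncatedRieszKernel μ hr, hr', ← hc,
        ENNReal.mul_rpow_of_ne_top (by simp) (by simp)]
      ring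
    _ ≤ _ := by
      gcongr
      exact le_self_add

end RieszKernel

/-! ### The quartic estimate for oscillatory Cauchy transforms -/

section Tonelli

variable {α β : Type*} [MeasurableSpace α] [MeasurableSpace β] {μ : Measure α} {ν : Measure β}
  [SFinite μ] [SFinite ν]

theorem lintegral_lintegral_swap_pairs {f : α → α → β → β → ℝ≥0∞}
    (hf : Measurable fun p : α × α × β × β ↦ f p.1 p.2.1 p.2.2.1 p.2.2.2) :
    ∫⁻ x, ∫⁻ x', ∫⁻ y, ∫⁻ y', f x x' y y' ∂ν ∂ν ∂μ ∂μ
      = ∫⁻ y, ∫⁻ y', ∫⁻ x', ∫⁻ x, f x x' y y' ∂μ ∂μ ∂ν ∂ν := by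
  calc ∫⁻ x, ∫⁻ x', ∫⁻ y, ∫⁻ y', f x x' y y' ∂ν ∂ν ∂μ ∂μ
      = ∫⁻ p, ∫⁻ q, f p.1 p.2 q.1 q.2 ∂ν.prod ν ∂μ.prod μ := by
        rw [lintegral_prod _ (by fun_prop)]
        exact lintegral_congr fun x ↦ lintegral_congr fun x' ↦
          (lintegral_prod (fun q : β × β ↦ f x x' q.1 q.2) (by fun_prop)).symm
    _ = ∫⁻ q, ∫⁻ p, f p.1 p.2 q.1 q.2 ∂μ.prod μ ∂ν.prod ν :=
        lintegral_lintegral_swap (by fun_prop)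
    _ = ∫⁻ y, ∫⁻ y', ∫⁻ x', ∫⁻ x, f x x' y y' ∂μ ∂μ ∂ν ∂ν := by
        rw [lintegral_prod _ (by fun_prop)]
        exact lintegral_congr fun y ↦ lintegral_congr fun y' ↦
          lintegral_prod_symm' (fun p : α × α ↦ f p.1 p.2 y y') (by fun_prop)

theorem lintegral_lintegral_lintegral_shear {G : Type*} [AddGroup G] [MeasurableSpace G]
    [MeasurableAdd₂ G] {μ : Measure G} [SFinite μ] [μ.IsAddRightInvariant] {f : G → G → G → ℝ≥0∞}
    (hf : Measurable fun p : G × G × G ↦ f p.1 p.2.1 p.2.2) :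
    ∫⁻ x, ∫⁻ v, ∫⁻ y, f x v y ∂μ ∂μ ∂μ = ∫⁻ v, ∫⁻ w, ∫⁻ y, f (w + y) v y ∂μ ∂μ ∂μ := by
  rw [lintegral_lintegral_swap (by fun_prop)]
  refine lintegral_congr fun v ↦ ?_
  rw [lintegral_lintegral_swap (by fun_prop),
    lintegral_lintegral_swap (f := fun w y ↦ f (w + y) v y) (by fun_prop)]
  exact lintegral_congr fun y ↦ (lintegral_add_right_eq_self (f · v y) y).symm

theorem lintegral_sq_lintegral_mul {ρ : β → ℝ≥0∞} {f : α → β → ℝ≥0∞} (hρ : Measurable ρ)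
    (hf : Measurable fun p : α × β ↦ f p.1 p.2) :
    ∫⁻ x, (∫⁻ y, ρ y * f x y ∂ν) ^ 2 ∂μ
      = ∫⁻ y, ∫⁻ y', ρ y * ρ y' * ∫⁻ x, f x y * f x y' ∂μ ∂ν ∂ν := by
  calc ∫⁻ x, (∫⁻ y, ρ y * f x y ∂ν) ^ 2 ∂μ
      = ∫⁻ x, ∫⁻ y, ∫⁻ y', ρ y * ρ y' * (f x y * f x y') ∂ν ∂ν ∂μ := by
        simp_rw [sq]
        refine lintegral_congr fun x ↦ ?_
        rw [← lintegral_lintegral_mul (by fun_prop) (by fun_prop)]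
        simp only [mul_mul_mul_comm]
    _ = ∫⁻ y, ∫⁻ y', ∫⁻ x, ρ y * ρ y' * (f x y * f x y') ∂μ ∂ν ∂ν := by
        rw [lintegral_lintegral_swap (by fun_prop)]
        exact lintegral_congr fun y ↦ lintegral_lintegral_swap (by fun_prop)
    _ = ∫⁻ y, ∫⁻ y', ρ y * ρ y' * ∫⁻ x, f x y * f x y' ∂μ ∂ν ∂ν := by
        refine lintegral_congr fun y ↦ lintegral_congr fun y' ↦ ?_
        rw [lintegral_const_mul _ (by fun_prop)]

end Tonelli

-- Split the exponent of the four Cauchy kernels in the square as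
-- `-1 = (-1 + t) / 2 + (-1 - t) / 2`; after symmetrisation the factors with exponent `-1 - t` form
-- a composition of Riesz kernels.
theorem exists_lintegral_sq_conv_le {t : ℝ} (ht : 0 < t) (ht1 : t < 1) :
    ∃ C : ℝ≥0, ∀ φ : ℂ → ℝ≥0∞, Measurable φ → ∀ z z' : ℂ,
      ∫⁻ x, (∫⁻ v, (φ v * ‖z - v‖ₑ⁻¹) * (φ (x - v) * ‖z' - (x - v)‖ₑ⁻¹)) ^ 2 ≤
      C * ∫⁻ v, ∫⁻ w, φ v ^ 2 * φ w ^ 2 * (‖z - v‖ₑ ^ (-1 + t) * ‖z' - w‖ₑ ^ (-1 + t)) *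
        ‖z - (z' - w + v)‖ₑ ^ (-2 * t) := by
  obtain ⟨C, hC⟩ := exists_lintegral_enorm_rpow_mul_enorm_rpow_le (V := ℂ) volume (a := -1 - t)
    (by rw [finrank_real_complex]; push_cast; linarith)
    (by rw [finrank_real_complex]; push_cast; linarith)
  rw [finrank_real_complex, show 2 * (-1 - t) + (2 : ℕ) = -2 * t by push_cast; ring] at hC
  refine ⟨2 * C, fun φ hφ z z' ↦ ?_⟩
  set H : ℂ → ℂ → ℂ → ℝ≥0∞ := fun x v y ↦ φ v * φ (x - y) *
    (‖z - v‖ₑ ^ ((-1 + t) / 2) * ‖z' - (x - y)‖ₑ ^ ((-1 + t) / 2)) *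
    (‖z - y‖ₑ ^ ((-1 - t) / 2) * ‖z' - (x - v)‖ₑ ^ ((-1 - t) / 2)) with hH
  have splitInv (u : ℂ) : ‖u‖ₑ⁻¹ = ‖u‖ₑ ^ ((-1 + t) / 2) * ‖u‖ₑ ^ ((-1 - t) / 2) := by
    rw [ennreal_rpow_mul_rpow_of_neg (by simp) (by linarith) (by linarith), ← ENNReal.rpow_neg_one]
    ring_nf
  have symmetrise (x : ℂ) :
      (∫⁻ v, (φ v * ‖z - v‖ₑ⁻¹) * (φ (x - v) * ‖z' - (x - v)‖ₑ⁻¹)) ^ 2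
        ≤ 2 * ∫⁻ v, ∫⁻ y, H x v y ^ 2 := by
    refine sq_lintegral_le_of_mul_le (by fun_prop) (by fun_prop) fun v y ↦ le_of_eq ?_
    simp only [hH, splitInv]
    ring
  have sqH (v w y : ℂ) : H (w + y) v y ^ 2 = φ v ^ 2 * φ w ^ 2 *
      (‖z - v‖ₑ ^ (-1 + t) * ‖z' - w‖ₑ ^ (-1 + t)) *
      (‖z - y‖ₑ ^ (-1 - t) * ‖z' - w + v - y‖ₑ ^ (-1 - t)) := by
    have : z' - (w + y - v) = z' - w + v - y := by ring
    simp only [hH, mul_pow, ennreal_rpow_sq, add_sub_cancel_right, this,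
      mul_div_cancel₀ _ (two_ne_zero' ℝ)]
  calc ∫⁻ x, (∫⁻ v, (φ v * ‖z - v‖ₑ⁻¹) * (φ (x - v) * ‖z' - (x - v)‖ₑ⁻¹)) ^ 2
      ≤ ∫⁻ x, 2 * ∫⁻ v, ∫⁻ y, H x v y ^ 2 := lintegral_mono symmetrise
    _ = 2 * ∫⁻ v, ∫⁻ w, ∫⁻ y, H (w + y) v y ^ 2 := by
      rw [lintegral_const_mul' _ _ (by simp), lintegral_lintegral_lintegral_shear (by fun_prop)]
    _ ≤ 2 * ∫⁻ v, ∫⁻ w, C * (φ v ^ 2 * φ w ^ 2 *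
          (‖z - v‖ₑ ^ (-1 + t) * ‖z' - w‖ₑ ^ (-1 + t)) * ‖z - (z' - w + v)‖ₑ ^ (-2 * t)) := by
      gcongr with v w
      simp_rw [sqH]
      rw [lintegral_const_mul _ (by fun_prop)]
      refine (mul_le_mul_right (hC _ _) _).trans_eq ?_
      ring
    _ = _ := by
      simp_rw [lintegral_const_mul' _ _ ENNReal.coe_ne_top]
      rw [ENNReal.coe_mul, ENNReal.coe_ofNat, mul_assoc]

/-- `ρ` has potentials of orders `1 ± t` bounded by `Λ`; the classes of such weights interpolate
around the Kato class of the Cauchy kernel, which is the case `t = 0`. -/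
structure KatoBound (t : ℝ) (ρ : ℂ → ℝ≥0∞) (Λ : ℝ≥0∞) : Prop where
  measurable : Measurable ρ
  lintegral_le : ∀ z, ∫⁻ v, ρ v * (‖z - v‖ₑ ^ (-1 - t) + ‖z - v‖ₑ ^ (-1 + t)) ≤ Λ

namespace KatoBound

variable {t : ℝ} {ρ : ℂ → ℝ≥0∞} {Λ : ℝ≥0∞}

theorem lintegral_mul_rpow_sub_le (h : KatoBound t ρ Λ) (z : ℂ) :
    ∫⁻ v, ρ v * ‖v - z‖ₑ ^ (-1 - t) ≤ Λ := by
  refine (lintegral_mono fun v ↦ ?_).trans (h.lintegral_le z)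
  rw [enorm_sub_rev]
  exact mul_le_mul_right le_self_add _

theorem lintegral_mul_rpow_add_le (h : KatoBound t ρ Λ) (z : ℂ) :
    ∫⁻ v, ρ v * ‖v - z‖ₑ ^ (-1 + t) ≤ Λ := by
  refine (lintegral_mono fun v ↦ ?_).trans (h.lintegral_le z)
  rw [enorm_sub_rev]
  exact mul_le_mul_right le_add_self _

theorem lintegral_mul_rpow_mul_rpow_le (h : KatoBound t ρ Λ) (ht : 0 < t) (ht1 : t < 1) (v w : ℂ) :
    ∫⁻ z, ρ z * (‖z - v‖ₑ ^ (-1 + t) * ‖z - w‖ₑ ^ (-2 * t)) ≤ 2 * Λ := by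
  have hρ := h.measurable
  calc ∫⁻ z, ρ z * (‖z - v‖ₑ ^ (-1 + t) * ‖z - w‖ₑ ^ (-2 * t))
      ≤ ∫⁻ z, (ρ z * ‖z - v‖ₑ ^ (-1 - t) + ρ z * ‖z - w‖ₑ ^ (-1 - t)) := by
        simp_rw [← mul_add]
        gcongr with z
        have young := ennreal_rpow_mul_rpow_le_add (x := ‖z - v‖ₑ) (y := ‖z - w‖ₑ) (a := -1 + t)
          (b := -2 * t) (by simp) (by simp) (by linarith) (by linarith)
        rwa [show -1 + t + -2 * t = -1 - t by ring] at young
    _ ≤ 2 * Λ := by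
        rw [lintegral_add_left (by fun_prop), two_mul]
        exact add_le_add (h.lintegral_mul_rpow_sub_le v) (h.lintegral_mul_rpow_sub_le w)

theorem lintegral_lintegral_mul_rpow_le (h : KatoBound t ρ Λ) (ht : 0 < t) (ht1 : t < 1)
    (v w : ℂ) :
    ∫⁻ z', ∫⁻ z, ρ z * ρ z' * ((‖z - v‖ₑ ^ (-1 + t) * ‖z' - w‖ₑ ^ (-1 + t)) *
      ‖z - (z' - w + v)‖ₑ ^ (-2 * t)) ≤ 2 * Λ ^ 2 := by
  have hρ := h.measurable
  calc _ = ∫⁻ z', ρ z' * ‖z' - w‖ₑ ^ (-1 + t) *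
          ∫⁻ z, ρ z * (‖z - v‖ₑ ^ (-1 + t) * ‖z - (z' - w + v)‖ₑ ^ (-2 * t)) := by
        refine lintegral_congr fun z' ↦ ?_
        rw [← lintegral_const_mul _ (by fun_prop)]
        refine lintegral_congr fun z ↦ ?_
        ring
    _ ≤ ∫⁻ z', ρ z' * ‖z' - w‖ₑ ^ (-1 + t) * (2 * Λ) := by
        gcongr with z'
        exact h.lintegral_mul_rpow_mul_rpow_le ht ht1 _ _
    _ ≤ 2 * Λ ^ 2 := by
        rw [lintegral_mul_const _ (by fun_prop)]
        refine (mul_le_mul_left (h.lintegral_mul_rpow_add_le w) _).trans_eq ?_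
        ring

end KatoBound

theorem exists_lintegral_lintegral_sq_conv_le {t : ℝ} (ht : 0 < t) (ht1 : t < 1) :
    ∃ C : ℝ≥0, ∀ φ : ℂ → ℝ≥0∞, Measurable φ → ∀ ρ Λ, KatoBound t ρ Λ →
      ∫⁻ z, ∫⁻ z', ρ z * ρ z' *
        ∫⁻ x, (∫⁻ v, (φ v * ‖z - v‖ₑ⁻¹) * (φ (x - v) * ‖z' - (x - v)‖ₑ⁻¹)) ^ 2 ≤
      C * (∫⁻ v, φ v ^ 2) ^ 2 * Λ ^ 2 := by
  obtain ⟨C, hC⟩ := exists_lintegral_sq_conv_le ht ht1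
  refine ⟨C * 2, fun φ hφ ρ Λ hρ ↦ ?_⟩
  have hρm := hρ.measurable
  set F : ℂ → ℂ → ℂ → ℂ → ℝ≥0∞ := fun z z' v w ↦ ρ z * ρ z' *
    ((‖z - v‖ₑ ^ (-1 + t) * ‖z' - w‖ₑ ^ (-1 + t)) * ‖z - (z' - w + v)‖ₑ ^ (-2 * t))
  have hFm : Measurable fun p : ℂ × ℂ × ℂ × ℂ ↦ F p.1 p.2.1 p.2.2.1 p.2.2.2 := by fun_prop
  calc _ ≤ ∫⁻ z, ∫⁻ z', C * ∫⁻ v, ∫⁻ w, φ v ^ 2 * φ w ^ 2 * F z z' v w := by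
        refine lintegral_mono fun z ↦ lintegral_mono fun z' ↦ ?_
        refine (mul_le_mul_right (hC φ hφ z z') _).trans_eq ?_
        rw [mul_left_comm, ← lintegral_const_mul _ (by fun_prop)]
        congr 1
        refine lintegral_congr fun v ↦ ?_
        rw [← lintegral_const_mul _ (by fun_prop)]
        refine lintegral_congr fun w ↦ ?_
        ring
    _ = C * ∫⁻ v, ∫⁻ w, φ v ^ 2 * φ w ^ 2 * ∫⁻ z', ∫⁻ z, F z z' v w := by
        simp_rw [lintegral_const_mul' _ _ ENNReal.coe_ne_top]
        rw [lintegral_lintegral_swap_pairs (by fun_prop)]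
        congr 1
        refine lintegral_congr fun v ↦ lintegral_congr fun w ↦ ?_
        rw [← lintegral_const_mul _ (by fun_prop)]
        refine lintegral_congr fun z' ↦ ?_
        rw [← lintegral_const_mul _ (by fun_prop)]
    _ ≤ C * ∫⁻ v, ∫⁻ w, φ v ^ 2 * φ w ^ 2 * (2 * Λ ^ 2) := by
        gcongr with v w
        exact hρ.lintegral_lintegral_mul_rpow_le ht ht1 v w
    _ = C * ((∫⁻ v, φ v ^ 2) * (∫⁻ v, φ v ^ 2) * (2 * Λ ^ 2)) := by
        rw [← lintegral_lintegral_mul (by fun_prop) (by fun_prop),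
          ← lintegral_mul_const _ (by fun_prop)]
        congr 1
        refine lintegral_congr fun v ↦ ?_
        rw [lintegral_mul_const _ (by fun_prop)]
    _ = _ := by
        push_cast
        ring

/-! ### The Cauchy transform -/

/-- The Cauchy potential `∫ ρ(v) / |z - v| dA(v)` of a weight `ρ`, which controls `∂̄⁻¹` on
functions dominated by `ρ`. The integrand is `⊤` at `v = z` unless `ρ z = 0`. -/
def cauchyPotential (ρ : ℂ → ℝ≥0∞) (z : ℂ) : ℝ≥0∞ := ∫⁻ v, ρ v * ‖z - v‖ₑ⁻¹

theorem cauchyPotential_mono {ρ ρ' : ℂ → ℝ≥0∞} (h : ∀ v, ρ v ≤ ρ' v) (z : ℂ) :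
    cauchyPotential ρ z ≤ cauchyPotential ρ' z :=
  lintegral_mono fun v ↦ mul_le_mul_left (h v) _

theorem cauchyPotential_const_mul (c : ℝ≥0) (ρ : ℂ → ℝ≥0∞) (z : ℂ) :
    cauchyPotential (fun v ↦ c * ρ v) z = c * cauchyPotential ρ z := by
  simp only [cauchyPotential, mul_assoc]
  exact lintegral_const_mul' _ _ ENNReal.coe_ne_top

theorem measurable_cauchyPotential {ρ : ℂ → ℝ≥0∞} (hρ : Measurable ρ) :
    Measurable (cauchyPotential ρ) := by
  unfold cauchyPotential
  fun_prop

theorem enorm_div_le_mul_inv (a b : ℂ) : ‖a / b‖ₑ ≤ ‖a‖ₑ * ‖b‖ₑ⁻¹ := by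
  rcases eq_or_ne b 0 with rfl | hb
  · simp
  · rw [div_eq_mul_inv, enorm_mul, enorm_inv hb]

theorem enorm_pi_inv_mul_le (z : ℂ) : ‖(Real.pi : ℂ)⁻¹ * z‖ₑ ≤ ‖z‖ₑ := by
  refine enorm_le_iff_norm_le.2 ?_
  rw [norm_mul, norm_inv, Complex.norm_of_nonneg Real.pi_pos.le]
  exact mul_le_of_le_one_left (norm_nonneg z)
    (inv_le_one_of_one_le₀ (by linarith [Real.pi_gt_three]))

theorem enorm_dbarInv_le_cauchyPotential (h : ℂ → ℂ) (z : ℂ) :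
    ‖dbarInv h z‖ₑ ≤ cauchyPotential (‖h ·‖ₑ) z :=
  calc ‖dbarInv h z‖ₑ ≤ ‖∫ w, h w / (z - w)‖ₑ := enorm_pi_inv_mul_le _
    _ ≤ ∫⁻ w, ‖h w / (z - w)‖ₑ := enorm_integral_le_lintegral_enorm _
    _ ≤ cauchyPotential (‖h ·‖ₑ) z := lintegral_mono fun _ ↦ enorm_div_le_mul_inv _ _

theorem measurable_dbarInv {h : ℂ → ℂ} (hh : Measurable h) : Measurable (dbarInv h) := by
  have kernel : StronglyMeasurable fun p : ℂ × ℂ ↦ h p.2 / (p.1 - p.2) :=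
    Measurable.stronglyMeasurable (by fun_prop)
  exact kernel.integral_prod_right.measurable.const_mul _

theorem dbarInv_const_mul (c : ℂ) (h : ℂ → ℂ) (z : ℂ) :
    dbarInv (fun w ↦ c * h w) z = c * dbarInv h z := by
  simp only [dbarInv, mul_div_assoc, integral_const_mul, mul_left_comm _ c]

theorem dbarInv_neg (h : ℂ → ℂ) (z : ℂ) : dbarInv (fun w ↦ -h w) z = -dbarInv h z := by
  simpa using dbarInv_const_mul (-1) h z

theorem dbarInv_mul_dbarInv_eq_integral (f g : ℂ → ℂ) (z : ℂ) :
    dbarInv (fun w ↦ f w * dbarInv g w) z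
      = (Real.pi : ℂ)⁻¹ * (Real.pi : ℂ)⁻¹ * ∫ w, f w / (z - w) * ∫ v, g v / (w - v) := by
  simp only [dbarInv]
  rw [mul_assoc, ← integral_const_mul (Real.pi : ℂ)⁻¹ fun w ↦ f w / (z - w) * _]
  refine congrArg _ (integral_congr_ae (.of_forall fun w ↦ ?_))
  ring

/-- `h` is measurable with absolute Cauchy potential at most `B`: the class of functions on which
`∂̄⁻¹` is given by an absolutely convergent integral and bounded uniformly. -/
structure CauchyBound (h : ℂ → ℂ) (B : ℝ≥0) : Prop where
  measurable : Measurable h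
  cauchyPotential_le : ∀ z, cauchyPotential (‖h ·‖ₑ) z ≤ B

namespace CauchyBound

variable {f g : ℂ → ℂ} {B B' M : ℝ≥0}

theorem lintegral_enorm_div_le (hf : CauchyBound f B) (z : ℂ) : ∫⁻ w, ‖f w / (z - w)‖ₑ ≤ B :=
  (lintegral_mono fun _ ↦ enorm_div_le_mul_inv _ _).trans (hf.cauchyPotential_le z)

theorem integrable (hf : CauchyBound f B) (z : ℂ) : Integrable fun w ↦ f w / (z - w) := by
  have hm := hf.measurable
  exact ⟨Measurable.aestronglyMeasurable (by fun_prop),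
    (hf.lintegral_enorm_div_le z).trans_lt ENNReal.coe_lt_top⟩

theorem enorm_dbarInv_le (hf : CauchyBound f B) (z : ℂ) : ‖dbarInv f z‖ₑ ≤ B :=
  (enorm_dbarInv_le_cauchyPotential f z).trans (hf.cauchyPotential_le z)

theorem measurable_dbarInv (hf : CauchyBound f B) : Measurable (dbarInv f) :=
  _root_.measurable_dbarInv hf.measurable

theorem mono (hf : CauchyBound f B) (hg : Measurable g) (h : ∀ v, ‖g v‖ₑ ≤ ‖f v‖ₑ) :
    CauchyBound g B :=
  ⟨hg, fun z ↦ (cauchyPotential_mono h z).trans (hf.cauchyPotential_le z)⟩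

theorem conj_comp (hf : CauchyBound f B) : CauchyBound (fun v ↦ conj (f v)) B :=
  hf.mono (continuous_conj.measurable.comp hf.measurable) fun v ↦ (RCLike.enorm_conj (f v)).le

theorem neg (hf : CauchyBound f B) : CauchyBound (fun v ↦ -f v) B :=
  hf.mono hf.measurable.neg fun v ↦ (enorm_neg (f v)).le

theorem mul (hf : CauchyBound f B) (hg : Measurable g) (hM : ∀ v, ‖g v‖ₑ ≤ M) :
    CauchyBound (fun v ↦ f v * g v) (M * B) where
  measurable := hf.measurable.mul hg
  cauchyPotential_le z :=
    calc cauchyPotential (fun v ↦ ‖f v * g v‖ₑ) z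
        ≤ cauchyPotential (fun v ↦ M * ‖f v‖ₑ) z := cauchyPotential_mono (fun v ↦ by
          rw [enorm_mul, mul_comm]
          exact mul_le_mul_left (hM v) _) z
      _ ≤ (M * B : ℝ≥0) := by
        rw [cauchyPotential_const_mul, ENNReal.coe_mul]
        exact mul_le_mul_right (hf.cauchyPotential_le z) _

theorem mul_conj (hf : CauchyBound f B) (hg : Measurable g) (hM : ∀ v, ‖g v‖ₑ ≤ M) :
    CauchyBound (fun v ↦ f v * conj (g v)) (M * B) :=
  hf.mul (continuous_conj.measurable.comp hg) fun v ↦ by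
    rw [RCLike.enorm_conj]
    exact hM v

theorem dbarInv_add_const_mul (hf : CauchyBound f B) (hg : CauchyBound g B') (c z : ℂ) :
    dbarInv (fun v ↦ f v + c * g v) z = dbarInv f z + c * dbarInv g z := by
  simp only [dbarInv, add_div, mul_div_assoc]
  rw [integral_add (hf.integrable z) ((hg.integrable z).const_mul c), integral_const_mul]
  ring

theorem dbarInv_add (hf : CauchyBound f B) (hg : CauchyBound g B') (z : ℂ) :
    dbarInv (fun v ↦ f v + g v) z = dbarInv f z + dbarInv g z := by
  simpa only [one_mul] using hf.dbarInv_add_const_mul hg 1 z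

theorem dbarInv_sub (hf : CauchyBound f B) (hg : CauchyBound g B') (z : ℂ) :
    dbarInv (fun v ↦ f v - g v) z = dbarInv f z - dbarInv g z := by
  simpa only [neg_one_mul, ← sub_eq_add_neg] using hf.dbarInv_add_const_mul hg (-1) z

theorem integrable_prod (hf : CauchyBound f B) (hg : CauchyBound g B') (z : ℂ) :
    Integrable (fun p : ℂ × ℂ ↦ f p.1 / (z - p.1) * (g p.2 / (p.1 - p.2)))
      (volume.prod volume) := by
  have hfm := hf.measurable
  have hgm := hg.measurable
  refine ⟨Measurable.aestronglyMeasurable (by fun_prop), ?_⟩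
  rw [hasFiniteIntegral_iff_enorm, lintegral_prod _ (by fun_prop)]
  calc ∫⁻ w, ∫⁻ v, ‖f w / (z - w) * (g v / (w - v))‖ₑ
      = ∫⁻ w, ‖f w / (z - w)‖ₑ * ∫⁻ v, ‖g v / (w - v)‖ₑ := by
        simp only [enorm_mul]
        exact lintegral_congr fun w ↦ lintegral_const_mul _ (by fun_prop)
    _ ≤ ∫⁻ w, ‖f w / (z - w)‖ₑ * B' := by
        gcongr with w
        exact hg.lintegral_enorm_div_le w
    _ ≤ B * B' := by
        rw [lintegral_mul_const _ (by fun_prop)]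
        exact mul_le_mul_left (hf.lintegral_enorm_div_le z) _
    _ < ⊤ := by finiteness

-- The Rota–Baxter identity, i.e. `FG = ∂̄⁻¹[∂̄(FG)]` for `F = ∂̄⁻¹f`, `G = ∂̄⁻¹g`; it only uses the
-- partial fraction identity `1/((z-w)(z-v)) = 1/((z-w)(w-v)) + 1/((z-v)(v-w))`.
theorem dbarInv_mul_dbarInv (hf : CauchyBound f B) (hg : CauchyBound g B') (z : ℂ) :
    dbarInv f z * dbarInv g z =
      dbarInv (fun w ↦ f w * dbarInv g w) z + dbarInv (fun w ↦ g w * dbarInv f w) z := by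
  have hfg := hf.integrable_prod hg z
  have hgf : Integrable (fun p : ℂ × ℂ ↦ g p.2 / (z - p.2) * (f p.1 / (p.2 - p.1)))
      (volume.prod volume) := (hg.integrable_prod hf z).swap
  have key : (∫ w, f w / (z - w)) * ∫ v, g v / (z - v) =
      (∫ w, f w / (z - w) * ∫ v, g v / (w - v)) + ∫ v, g v / (z - v) * ∫ w, f w / (v - w) := by
    calc (∫ w, f w / (z - w)) * ∫ v, g v / (z - v)
        = ∫ w, ∫ v, f w / (z - w) * (g v / (z - v)) := by
          simp_rw [integral_const_mul, integral_mul_const]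
      _ = ∫ w, ∫ v, (f w / (z - w) * (g v / (w - v)) + g v / (z - v) * (f w / (v - w))) := by
          refine integral_congr_ae ?_
          filter_upwards [compl_mem_ae_iff.2 (measure_singleton z)] with w hw
          refine integral_congr_ae ?_
          filter_upwards [compl_mem_ae_iff.2 (measure_singleton z),
            compl_mem_ae_iff.2 (measure_singleton w)] with v hv hvw
          have hzw : z - w ≠ 0 := sub_ne_zero.2 (Ne.symm hw)
          have hzv : z - v ≠ 0 := sub_ne_zero.2 (Ne.symm hv)
          have hwv : w - v ≠ 0 := sub_ne_zero.2 (Ne.symm hvw)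
          rw [← neg_sub w v]
          field_simp
          ring
      _ = ∫ p : ℂ × ℂ, (f p.1 / (z - p.1) * (g p.2 / (p.1 - p.2)) +
            g p.2 / (z - p.2) * (f p.1 / (p.2 - p.1))) ∂(volume.prod volume) :=
          (integral_prod _ (hfg.add hgf)).symm
      _ = _ := by
          rw [integral_add hfg hgf, integral_prod _ hfg, integral_prod_symm _ hgf]
          simp_rw [integral_const_mul]
  rw [dbarInv_mul_dbarInv_eq_integral, dbarInv_mul_dbarInv_eq_integral, ← mul_add, ← key]
  simp only [dbarInv]
  ring

theorem enorm_dbarInv_pow_le (hf : CauchyBound f B) (n : ℕ) (z : ℂ) :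
    ‖dbarInv f z ^ n‖ₑ ≤ (B ^ n : ℝ≥0) := by
  rw [enorm_pow, ENNReal.coe_pow]
  exact pow_le_pow_left' (hf.enorm_dbarInv_le z) n

theorem dbarInv_pow_succ (hf : CauchyBound f B) (n : ℕ) (z : ℂ) :
    dbarInv f z ^ (n + 1) = (n + 1) * dbarInv (fun w ↦ f w * dbarInv f w ^ n) z := by
  induction n generalizing z with
  | zero => simp
  | succ n ih =>
    have hfn : CauchyBound (fun w ↦ f w * dbarInv f w ^ n) (B ^ n * B) :=
      hf.mul (hf.measurable_dbarInv.pow_const n) (hf.enorm_dbarInv_pow_le n)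
    calc dbarInv f z ^ (n + 1 + 1)
        = (n + 1) * (dbarInv f z * dbarInv (fun w ↦ f w * dbarInv f w ^ n) z) := by
          rw [pow_succ', ih]
          ring
      _ = dbarInv (fun w ↦ f w * ((n + 1) * dbarInv (fun w ↦ f w * dbarInv f w ^ n) w)) z
          + (n + 1) * dbarInv (fun w ↦ f w * dbarInv f w ^ n * dbarInv f w) z := by
          rw [hf.dbarInv_mul_dbarInv hfn, mul_add, ← dbarInv_const_mul]
          simp only [mul_left_comm]
      _ = _ := by
          simp only [← ih, mul_assoc, ← pow_succ]
          push_cast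
          ring

theorem hasSum_dbarInv_mul_exp (hf : CauchyBound f B) (hg : Measurable g) (hM : ∀ v, ‖g v‖ₑ ≤ M)
    (z : ℂ) : HasSum (fun n : ℕ ↦ dbarInv (fun w ↦ f w * (g w ^ n / n.factorial)) z)
      (dbarInv (fun w ↦ f w * cexp (g w)) z) := by
  have hfm := hf.measurable
  simp only [dbarInv, mul_div_right_comm]
  refine HasSum.mul_left _ (hasSum_integral_of_dominated_convergence
    (fun n w ↦ ‖f w / (z - w)‖ * (M ^ n / n.factorial)) (fun n ↦ ?_) (fun n ↦ ?_) ?_ ?_ ?_)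
  · exact Measurable.aestronglyMeasurable (by fun_prop)
  · refine Eventually.of_forall fun w ↦ ?_
    rw [norm_mul, norm_div (_ ^ _), norm_pow, Complex.norm_natCast]
    gcongr
    exact enorm_le_coe.1 (hM w)
  · exact Eventually.of_forall fun w ↦ (Real.summable_pow_div_factorial _).mul_left _
  · simp_rw [tsum_mul_left]
    exact (hf.integrable z).norm.mul_const _
  · refine Eventually.of_forall fun w ↦ HasSum.mul_left _ ?_
    rw [Complex.exp_eq_exp_ℂ]
    exact NormedSpace.expSeries_div_hasSum_exp _

theorem dbarInv_mul_exp_dbarInv (hf : CauchyBound f B) (z : ℂ) :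
    dbarInv (fun w ↦ f w * cexp (dbarInv f w)) z = cexp (dbarInv f z) - 1 := by
  have series := hf.hasSum_dbarInv_mul_exp hf.measurable_dbarInv hf.enorm_dbarInv_le z
  have expSeries := NormedSpace.expSeries_div_hasSum_exp (dbarInv f z)
  rw [← Complex.exp_eq_exp_ℂ, ← hasSum_nat_add_iff' 1] at expSeries
  have head : ∑ i ∈ Finset.range 1, dbarInv f z ^ i / (i.factorial : ℂ) = 1 := by simp
  rw [head] at expSeries
  refine series.unique (expSeries.congr_fun fun n ↦ ?_)
  have hn : (n + 1 : ℂ) ≠ 0 := n.cast_add_one_ne_zero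
  have hn' : (n.factorial : ℂ) ≠ 0 := by exact_mod_cast n.factorial_ne_zero
  have coeff (w : ℂ) : f w * (dbarInv f w ^ n / n.factorial)
      = (n.factorial : ℂ)⁻¹ * (f w * dbarInv f w ^ n) := by ring
  simp_rw [coeff]
  rw [dbarInv_const_mul, hf.dbarInv_pow_succ, Nat.factorial_succ]
  push_cast
  field_simp

theorem enorm_exp_dbarInv_le (hf : CauchyBound f B) (z : ℂ) :
    ‖cexp (dbarInv f z)‖ₑ ≤ (Real.exp B).toNNReal := by
  rw [← ofReal_norm]
  exact ENNReal.ofReal_le_ofReal ((Complex.norm_exp_le_exp_norm _).trans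
    (Real.exp_le_exp.2 (enorm_le_coe.1 (hf.enorm_dbarInv_le z))))

-- The integrating factor identity `∂̄(G e^F) = (g + f G) e^F` for `F = ∂̄⁻¹f`, `G = ∂̄⁻¹g`.
theorem dbarInv_mul_exp_dbarInv_eq (hg : CauchyBound g B) (hf : CauchyBound f B') (z : ℂ) :
    dbarInv g z * cexp (dbarInv f z)
      = dbarInv (fun w ↦ (g w + f w * dbarInv g w) * cexp (dbarInv f w)) z := by
  have hFm := hf.measurable_dbarInv
  have hfE := hf.mul (g := fun w ↦ cexp (dbarInv f w)) (by fun_prop) hf.enorm_exp_dbarInv_le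
  have hgE := hg.mul (g := fun w ↦ cexp (dbarInv f w)) (by fun_prop) hf.enorm_exp_dbarInv_le
  have hfEG := hfE.mul hg.measurable_dbarInv hg.enorm_dbarInv_le
  have leibniz := hg.dbarInv_mul_dbarInv hfE z
  simp only [hf.dbarInv_mul_exp_dbarInv, mul_sub, mul_one] at leibniz
  rw [hgE.dbarInv_sub hg] at leibniz
  have expand (w : ℂ) : (g w + f w * dbarInv g w) * cexp (dbarInv f w)
      = g w * cexp (dbarInv f w) + f w * cexp (dbarInv f w) * dbarInv g w := by ring
  simp only [expand]
  rw [hgE.dbarInv_add hfEG]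
  linear_combination leibniz

-- Similarity principle: on the zero set of `G = ∂̄⁻¹g` the division below gives `0`, so with
-- `f = -a conj(G) / G` always `g + f G = g - a conj(G)`, and `e^{∂̄⁻¹f}` removes the term in `G`.
theorem enorm_dbarInv_le_exp_mul_cauchyPotential {a : ℂ → ℂ} {A : ℝ≥0} (ha : CauchyBound a A)
    (hg : CauchyBound g B) (z : ℂ) :
    ‖dbarInv g z‖ₑ ≤ (Real.exp A).toNNReal ^ 2 *
      cauchyPotential (fun v ↦ ‖g v - a v * conj (dbarInv g v)‖ₑ) z := by
  set G := dbarInv g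
  set e := (Real.exp A).toNNReal
  set h : ℂ → ℂ := fun w ↦ g w - a w * conj (G w)
  set f : ℂ → ℂ := fun w ↦ a w * -(conj (G w) / G w) with hf
  have hGm : Measurable G := hg.measurable_dbarInv
  have hfA : CauchyBound f A := by
    refine ha.mono (ha.measurable.mul
      ((continuous_conj.measurable.comp hGm).div hGm).neg) fun v ↦ ?_
    rw [enorm_mul, enorm_neg]
    refine mul_le_of_le_one_right zero_le ((enorm_div_le_mul_inv _ _).trans ?_)
    rw [RCLike.enorm_conj]
    exact ENNReal.mul_inv_le_one _
  have cancel (w : ℂ) : g w + f w * G w = h w := by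
    rcases eq_or_ne (G w) 0 with h0 | h0
    · simp [h, h0]
    · simp only [hf, h]
      field_simp
      ring
  have solve : G z = dbarInv (fun w ↦ h w * cexp (dbarInv f w)) z
      * cexp (dbarInv (fun w ↦ -f w) z) := by
    simp_rw [← cancel]
    rw [← hg.dbarInv_mul_exp_dbarInv_eq hfA, dbarInv_neg, mul_assoc, ← Complex.exp_add,
      add_neg_cancel, Complex.exp_zero, mul_one]
  calc ‖G z‖ₑ ≤ cauchyPotential (fun w ↦ ‖h w * cexp (dbarInv f w)‖ₑ) z * e := by
        rw [solve, enorm_mul]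
        exact mul_le_mul' (enorm_dbarInv_le_cauchyPotential _ z) (hfA.neg.enorm_exp_dbarInv_le z)
    _ ≤ cauchyPotential (fun w ↦ e * ‖h w‖ₑ) z * e := by
        refine mul_le_mul_left (cauchyPotential_mono (fun w ↦ ?_) z) _
        rw [enorm_mul, mul_comm]
        exact mul_le_mul_left (hfA.enorm_exp_dbarInv_le w) _
    _ = e ^ 2 * cauchyPotential (‖h ·‖ₑ) z := by
        rw [cauchyPotential_const_mul]
        ring

end CauchyBound

theorem CauchyBound.integral_mul_dbarInv {f g : ℂ → ℂ} {B : ℝ≥0} (hg : CauchyBound g B)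
    (hfm : Measurable f) (hf : Integrable f) :
    ∫ z, f z * dbarInv g z = -∫ z, dbarInv f z * g z := by
  have hgm := hg.measurable
  have hint : Integrable (fun p : ℂ × ℂ ↦ f p.1 * (g p.2 / (p.1 - p.2))) (volume.prod volume) := by
    refine ⟨Measurable.aestronglyMeasurable (by fun_prop), ?_⟩
    rw [hasFiniteIntegral_iff_enorm, lintegral_prod _ (by fun_prop)]
    calc ∫⁻ z, ∫⁻ w, ‖f z * (g w / (z - w))‖ₑ
        = ∫⁻ z, ‖f z‖ₑ * ∫⁻ w, ‖g w / (z - w)‖ₑ := by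
          simp only [enorm_mul]
          exact lintegral_congr fun z ↦ lintegral_const_mul _ (by fun_prop)
      _ ≤ ∫⁻ z, ‖f z‖ₑ * B := by
          gcongr with z
          exact hg.lintegral_enorm_div_le z
      _ < ⊤ := by
          rw [lintegral_mul_const _ (by fun_prop)]
          exact ENNReal.mul_lt_top hf.2 ENNReal.coe_lt_top
  calc ∫ z, f z * dbarInv g z
      = (Real.pi : ℂ)⁻¹ * ∫ z, ∫ w, f z * (g w / (z - w)) := by
        simp only [dbarInv, integral_const_mul, mul_left_comm (f _)]
    _ = (Real.pi : ℂ)⁻¹ * ∫ w, ∫ z, -(f z / (w - z) * g w) := by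
        rw [integral_integral_swap hint]
        refine congrArg _ (integral_congr_ae (.of_forall fun w ↦
          integral_congr_ae (.of_forall fun z ↦ ?_)))
        simp only
        rw [← neg_sub w z, div_neg]
        ring
    _ = -∫ z, dbarInv f z * g z := by
        simp only [integral_neg, integral_mul_const, dbarInv, mul_assoc, integral_const_mul,
          mul_neg]

theorem measurable_dbarInv_ek_mul {p : ℂ → ℂ} (hp : Measurable p) :
    Measurable fun x : ℂ × ℂ ↦ dbarInv (fun v ↦ ek (-x.1) v * p v) x.2 := by
  have hek : Measurable fun x : (ℂ × ℂ) × ℂ ↦ ek (-x.1.1) x.2 :=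
    (continuous_ek.comp (by fun_prop : Continuous fun x : (ℂ × ℂ) × ℂ ↦ (-x.1.1, x.2))).measurable
  have kernel : StronglyMeasurable fun x : (ℂ × ℂ) × ℂ ↦
      ek (-x.1.1) x.2 * p x.2 / (x.1.2 - x.2) := Measurable.stronglyMeasurable (by fun_prop)
  exact kernel.integral_prod_right.measurable.const_mul _

/-- The norm of `L²(ρ dA)`. -/
abbrev weightedNorm {E : Type*} [ENorm E] (ρ : ℂ → ℝ≥0∞) (f : ℂ → E) : ℝ≥0∞ :=
  eLpNorm f 2 (volume.withDensity ρ)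

theorem weightedNorm_sq {E : Type*} [ENorm E] {ρ : ℂ → ℝ≥0∞} {f : ℂ → E} (hρ : Measurable ρ)
    (hf : Measurable fun z ↦ ‖f z‖ₑ) : weightedNorm ρ f ^ 2 = ∫⁻ z, ρ z * ‖f z‖ₑ ^ 2 := by
  rw [eLpNorm_two_sq, lintegral_withDensity_eq_lintegral_mul _ hρ (by fun_prop)]
  rfl

theorem weightedNorm_conj (ρ : ℂ → ℝ≥0∞) (f : ℂ → ℂ) :
    weightedNorm ρ (fun z ↦ conj (f z)) = weightedNorm ρ f :=
  eLpNorm_congr_enorm_ae (.of_forall fun z ↦ RCLike.enorm_conj (f z))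

theorem exists_lintegral_weightedNorm_dbarInv_pow_le {t : ℝ} (ht : 0 < t) (ht1 : t < 1) :
    ∃ C : ℝ≥0, ∀ (p : ℂ → ℂ) (B : ℝ≥0), CauchyBound p B → ∀ ρ Λ, KatoBound t ρ Λ →
      ∫⁻ k, weightedNorm ρ (dbarInv fun v ↦ ek (-k) v * p v) ^ 4
        ≤ C * (∫⁻ v, ‖p v‖ₑ ^ 2) ^ 2 * Λ ^ 2 := by
  obtain ⟨C, hC⟩ := exists_lintegral_lintegral_sq_conv_le ht ht1
  set c := ((2 * Real.pi) ^ 2).toNNReal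
  refine ⟨c * C, fun p B hp ρ Λ hρ ↦ ?_⟩
  have hpm := hp.measurable
  have hm := (measurable_dbarInv_ek_mul hpm).enorm
  set X : ℂ → ℂ → ℂ := fun k ↦ dbarInv fun v ↦ ek (-k) v * p v with hX
  have enorm_X_le (k z : ℂ) : ‖X k z‖ₑ ≤ ‖∫ v, ek (-k) v * (p v / (z - v))‖ₑ := by
    simp only [hX, dbarInv, mul_div_assoc]
    exact enorm_pi_inv_mul_le _
  have plancherel (z z' : ℂ) : ∫⁻ k, ‖X k z‖ₑ ^ 2 * ‖X k z'‖ₑ ^ 2 ≤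
      c * ∫⁻ x, (∫⁻ v, (‖p v‖ₑ * ‖z - v‖ₑ⁻¹) * (‖p (x - v)‖ₑ * ‖z' - (x - v)‖ₑ⁻¹)) ^ 2 := by
    refine (lintegral_mono fun k ↦ mul_le_mul' (pow_le_pow_left' (enorm_X_le k z) 2)
      (pow_le_pow_left' (enorm_X_le k z') 2)).trans ?_
    refine (lintegral_enorm_integral_ek_sq_mul_le (hp.integrable z) (hp.integrable z')).trans ?_
    gcongr ENNReal.ofReal _ * ∫⁻ x, (∫⁻ v, ?_ * ?_) ^ 2 with x v
    all_goals exact enorm_div_le_mul_inv _ _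
  calc ∫⁻ k, weightedNorm ρ (X k) ^ 4
      = ∫⁻ k, (∫⁻ z, ρ z * ‖X k z‖ₑ ^ 2) ^ 2 := by
        refine lintegral_congr fun k ↦ ?_
        rw [← weightedNorm_sq hρ.measurable (hm.comp measurable_prodMk_left), ← pow_mul]
    _ = ∫⁻ z, ∫⁻ z', ρ z * ρ z' * ∫⁻ k, ‖X k z‖ₑ ^ 2 * ‖X k z'‖ₑ ^ 2 :=
        lintegral_sq_lintegral_mul hρ.measurable (hm.pow_const 2)
    _ ≤ ∫⁻ z, ∫⁻ z', c * (ρ z * ρ z' *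
          ∫⁻ x, (∫⁻ v, (‖p v‖ₑ * ‖z - v‖ₑ⁻¹) * (‖p (x - v)‖ₑ * ‖z' - (x - v)‖ₑ⁻¹)) ^ 2) := by
        simp_rw [mul_left_comm (c : ℝ≥0∞)]
        gcongr with z z'
        exact plancherel z z'
    _ ≤ (c * C : ℝ≥0) * (∫⁻ v, ‖p v‖ₑ ^ 2) ^ 2 * Λ ^ 2 := by
        simp_rw [lintegral_const_mul' _ _ ENNReal.coe_ne_top]
        rw [ENNReal.coe_mul, mul_assoc, mul_assoc, ← mul_assoc (C : ℝ≥0∞)]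
        exact mul_le_mul_right (hC _ (by fun_prop) ρ Λ hρ) _

/-! ### Estimates at a fixed frequency -/

/-- `ρ` is a weight with Cauchy potential at most `Λ`. This makes `f ↦ ∂̄⁻¹[b f]` bounded on
`L²(ρ dA)` whenever `|b| ≤ ρ`, and the similarity principle quantitative. -/
structure PotentialBound (ρ : ℂ → ℝ≥0∞) (Λ : ℝ≥0) : Prop where
  measurable : Measurable ρ
  cauchyPotential_le : ∀ z, cauchyPotential ρ z ≤ Λ

/-- `b` is measurable, integrable and at most `ρ` in absolute value: the potentials for which
`L²(ρ dA)` is the working space. Several potentials are compared in one space by sharing `ρ`. -/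
structure DominatedBy (ρ : ℂ → ℝ≥0∞) (b : ℂ → ℂ) : Prop where
  measurable : Measurable b
  integrable : Integrable b
  enorm_le : ∀ z, ‖b z‖ₑ ≤ ρ z

namespace DominatedBy

variable {ρ : ℂ → ℝ≥0∞} {b : ℂ → ℂ}

theorem conj_comp (hb : DominatedBy ρ b) : DominatedBy ρ (fun z ↦ conj (b z)) where
  measurable := by
    have := hb.measurable
    fun_prop
  integrable := (conjCLE.integrable_comp_iff (φ := b)).2 hb.integrable
  enorm_le z := (RCLike.enorm_conj _).trans_le (hb.enorm_le z)

theorem neg (hb : DominatedBy ρ b) : DominatedBy ρ (fun z ↦ -b z) where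
  measurable := hb.measurable.neg
  integrable := hb.integrable.neg
  enorm_le z := (enorm_neg _).trans_le (hb.enorm_le z)

theorem ek_mul (hb : DominatedBy ρ b) (k : ℂ) : DominatedBy ρ (fun z ↦ ek k z * b z) where
  measurable := (continuous_ek_apply k).measurable.mul hb.measurable
  integrable := hb.integrable.bdd_mul (continuous_ek_apply k).aestronglyMeasurable
    (.of_forall fun z ↦ (norm_ek k z).le)
  enorm_le z := by
    rw [enorm_mul, enorm_ek, one_mul]
    exact hb.enorm_le z

theorem integrable_mul_mul (hb : DominatedBy ρ b) {f g : ℂ → ℂ} {M N : ℝ≥0} (hf : Measurable f)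
    (hfM : ∀ z, ‖f z‖ₑ ≤ M) (hg : Measurable g) (hgN : ∀ z, ‖g z‖ₑ ≤ N) :
    Integrable fun z ↦ b z * f z * g z := by
  have hbf : Integrable fun z ↦ b z * f z := hb.integrable.mul_bdd (c := M)
    hf.aestronglyMeasurable (.of_forall fun z ↦ enorm_le_coe.1 (hfM z))
  exact hbf.mul_bdd (c := N) hg.aestronglyMeasurable (.of_forall fun z ↦ enorm_le_coe.1 (hgN z))

theorem enorm_integral_mul_mul_le (hb : DominatedBy ρ b) (hρ : Measurable ρ) {f g : ℂ → ℂ}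
    (hf : Measurable f) (hg : Measurable g) :
    ‖∫ z, b z * f z * g z‖ₑ ≤ weightedNorm ρ f * weightedNorm ρ g := by
  refine (ENNReal.pow_le_pow_left_iff two_ne_zero).1 ?_
  calc ‖∫ z, b z * f z * g z‖ₑ ^ 2
      ≤ (∫⁻ z, ρ z * (‖f z‖ₑ * ‖g z‖ₑ)) ^ 2 := by
        refine pow_le_pow_left' ((enorm_integral_le_lintegral_enorm _).trans ?_) 2
        refine lintegral_mono fun z ↦ ?_
        rw [enorm_mul, enorm_mul, mul_assoc]
        exact mul_le_mul_left (hb.enorm_le z) _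
    _ = (∫⁻ z, ‖f z‖ₑ * ‖g z‖ₑ ∂volume.withDensity ρ) ^ 2 := by
        rw [lintegral_withDensity_eq_lintegral_mul _ hρ (by fun_prop)]
        rfl
    _ ≤ (weightedNorm ρ f * weightedNorm ρ g) ^ 2 := by
        rw [mul_pow, eLpNorm_two_sq, eLpNorm_two_sq]
        exact sq_lintegral_mul_le (by fun_prop) (by fun_prop)

end DominatedBy

/-- The constant in the `L²(ρ dA)` bound for solutions of `m = y + ∂̄⁻¹[b conj m]`, `|b| ≤ ρ`,
when `ρ` has Cauchy potential at most `Λ`. -/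
def solutionBound (Λ : ℝ≥0) : ℝ≥0 := 1 + (Real.exp Λ).toNNReal ^ 2 * Λ

namespace PotentialBound

variable {ρ : ℂ → ℝ≥0∞} {Λ : ℝ≥0} {b : ℂ → ℂ}

theorem cauchyBound (h : PotentialBound ρ Λ) (hb : DominatedBy ρ b) : CauchyBound b Λ :=
  ⟨hb.measurable, fun z ↦ (cauchyPotential_mono hb.enorm_le z).trans (h.cauchyPotential_le z)⟩

-- Schur's test.
theorem weightedNorm_cauchyPotential_le (h : PotentialBound ρ Λ) {g : ℂ → ℂ} (hg : Measurable g) :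
    weightedNorm ρ (cauchyPotential fun v ↦ ρ v * ‖g v‖ₑ) ≤ Λ * weightedNorm ρ g := by
  have hρ := h.measurable
  refine (ENNReal.pow_le_pow_left_iff two_ne_zero).1 ?_
  calc weightedNorm ρ (cauchyPotential fun v ↦ ρ v * ‖g v‖ₑ) ^ 2
      = ∫⁻ z, ρ z * cauchyPotential (fun v ↦ ρ v * ‖g v‖ₑ) z ^ 2 :=
        weightedNorm_sq hρ (measurable_cauchyPotential (by fun_prop))
    _ ≤ ∫⁻ z, ρ z * (Λ * ∫⁻ v, ρ v * ‖z - v‖ₑ⁻¹ * ‖g v‖ₑ ^ 2) := by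
        refine lintegral_mono fun z ↦ mul_le_mul_right ?_ _
        simp only [cauchyPotential, mul_right_comm (ρ _) ‖g _‖ₑ]
        exact (sq_lintegral_mul_le_weighted (by fun_prop) hg.enorm).trans
          (mul_le_mul_left (h.cauchyPotential_le z) _)
    _ = ∫⁻ z, ∫⁻ v, Λ * (ρ v * ‖g v‖ₑ ^ 2) * (ρ z * ‖v - z‖ₑ⁻¹) := by
        refine lintegral_congr fun z ↦ ?_
        rw [← lintegral_const_mul _ (by fun_prop), ← lintegral_const_mul _ (by fun_prop)]
        refine lintegral_congr fun v ↦ ?_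
        rw [enorm_sub_rev]
        ring
    _ = ∫⁻ v, Λ * (ρ v * ‖g v‖ₑ ^ 2) * cauchyPotential ρ v := by
        rw [lintegral_lintegral_swap (by fun_prop)]
        exact lintegral_congr fun v ↦ lintegral_const_mul _ (by fun_prop)
    _ ≤ ∫⁻ v, Λ * (ρ v * ‖g v‖ₑ ^ 2) * Λ := by
        gcongr with v
        exact h.cauchyPotential_le v
    _ = (Λ * weightedNorm ρ g) ^ 2 := by
        rw [lintegral_mul_const _ (by fun_prop), lintegral_const_mul _ (by fun_prop), mul_pow,
          weightedNorm_sq hρ hg.enorm]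
        ring

theorem weightedNorm_dbarInv_mul_le (h : PotentialBound ρ Λ) (hb : DominatedBy ρ b) {g : ℂ → ℂ}
    (hg : Measurable g) :
    weightedNorm ρ (dbarInv fun w ↦ b w * g w) ≤ Λ * weightedNorm ρ g :=
  calc weightedNorm ρ (dbarInv fun w ↦ b w * g w)
      ≤ weightedNorm ρ (cauchyPotential fun v ↦ ρ v * ‖g v‖ₑ) :=
        eLpNorm_mono_enorm fun z ↦ (enorm_dbarInv_le_cauchyPotential _ z).trans <|
          cauchyPotential_mono (fun v ↦ by
            rw [enorm_mul]
            exact mul_le_mul_left (hb.enorm_le v) _) z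
    _ ≤ Λ * weightedNorm ρ g := h.weightedNorm_cauchyPotential_le hg

theorem weightedNorm_le_of_eq_add_dbarInv (h : PotentialBound ρ Λ) (hb : DominatedBy ρ b)
    {m y : ℂ → ℂ} {M : ℝ≥0} (hm : Measurable m) (hM : ∀ z, ‖m z‖ₑ ≤ M)
    (heq : ∀ z, m z = y z + dbarInv (fun w ↦ b w * conj (m w)) z) :
    weightedNorm ρ m ≤ solutionBound Λ * weightedNorm ρ y := by
  set e : ℝ≥0 := (Real.exp Λ).toNNReal
  set x := dbarInv fun w ↦ b w * conj (m w)
  have hbm := (h.cauchyBound hb).mul_conj hm hM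
  have hx : Measurable x := hbm.measurable_dbarInv
  have hmy : m = y + x := funext heq
  have hy : Measurable y := by
    rw [← add_sub_cancel_right y x, ← hmy]
    exact hm.sub hx
  have pointwise (z : ℂ) : ‖x z‖ₑ ≤ e ^ 2 * cauchyPotential (fun v ↦ ρ v * ‖y v‖ₑ) z := by
    refine ((h.cauchyBound hb).enorm_dbarInv_le_exp_mul_cauchyPotential hbm z).trans
      (mul_le_mul_right (cauchyPotential_mono (fun v ↦ ?_) z) _)
    rw [← mul_sub, ← map_sub, heq v, add_sub_cancel_right, enorm_mul, RCLike.enorm_conj]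
    exact mul_le_mul_left (hb.enorm_le v) _
  have hxy : weightedNorm ρ x ≤ e ^ 2 * (Λ * weightedNorm ρ y) :=
    calc weightedNorm ρ x
        ≤ (e ^ 2 : ℝ≥0) • weightedNorm ρ (cauchyPotential fun v ↦ ρ v * ‖y v‖ₑ) :=
          eLpNorm_le_nnreal_smul_eLpNorm_of_ae_le_mul' (.of_forall pointwise) _
      _ ≤ e ^ 2 * (Λ * weightedNorm ρ y) := by
          rw [ENNReal.smul_def, smul_eq_mul, ENNReal.coe_pow]
          exact mul_le_mul_right (h.weightedNorm_cauchyPotential_le hy) _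
  calc weightedNorm ρ m ≤ weightedNorm ρ y + weightedNorm ρ x := by
        rw [hmy]
        exact eLpNorm_add_le hy.aestronglyMeasurable hx.aestronglyMeasurable one_le_two
    _ ≤ weightedNorm ρ y + e ^ 2 * (Λ * weightedNorm ρ y) := by gcongr
    _ = solutionBound Λ * weightedNorm ρ y := by
        simp only [solutionBound, ENNReal.coe_add, ENNReal.coe_mul, ENNReal.coe_pow,
          ENNReal.coe_one]
        ring

end PotentialBound

/-- `m` is a bounded solution of `m = ∂̄⁻¹[b (1 + conj m)]`. A scattering pair `(u₁, u₂)` for the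
potential `a = e_{-k} q` decouples into `u₁ - 1 + u₂` and `u₁ - 1 - u₂`, which solve this equation
for `b = a` and `b = -a`. -/
structure IsJostSolution (b m : ℂ → ℂ) : Prop where
  measurable : Measurable m
  bounded : ∃ M : ℝ≥0, ∀ z, ‖m z‖ₑ ≤ M
  eq : ∀ z, m z = dbarInv (fun w ↦ b w * (1 + conj (m w))) z

/-- The contribution to `∫ e_{-k} q conj(u₁)` that is quadratic in the potential, expressed through
a solution `m` of the decoupled equation. -/
def jostPairing (b m : ℂ → ℂ) : ℂ := ∫ z, b z * dbarInv (fun w ↦ conj (b w)) z * conj (m z)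

/-- The size in `L²(ρ dA)` of the Cauchy transforms of `b` and `conj b`. For `b = e_{-k} q` its
square bounds the quadratic part of the scattering transform at `k`. -/
def scatteringSize (ρ : ℂ → ℝ≥0∞) (b : ℂ → ℂ) : ℝ≥0∞ :=
  weightedNorm ρ (dbarInv b) + weightedNorm ρ (dbarInv fun w ↦ conj (b w))

/-- The constant in the Lipschitz estimate for `jostPairing`, for weights of Cauchy potential at
most `Λ`; it collects the three terms of the difference. -/
def pairingBound (Λ : ℝ≥0) : ℝ≥0 := solutionBound Λ * (3 + Λ * solutionBound Λ)

theorem scatteringSize_neg (ρ : ℂ → ℝ≥0∞) (b : ℂ → ℂ) :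
    scatteringSize ρ (fun z ↦ -b z) = scatteringSize ρ b := by
  have flip (f : ℂ → ℂ) : weightedNorm ρ (dbarInv fun w ↦ -f w) = weightedNorm ρ (dbarInv f) := by
    rw [funext (dbarInv_neg f)]
    exact eLpNorm_neg _ 2 _
  simp only [scatteringSize, map_neg, flip]

theorem DominatedBy.integrable_mul_dbarInv_conj_mul_conj {ρ : ℂ → ℝ≥0∞} {b c m : ℂ → ℂ}
    {B M : ℝ≥0} (hb : DominatedBy ρ b) (hc : CauchyBound (fun w ↦ conj (c w)) B)
    (hm : Measurable m) (hM : ∀ z, ‖m z‖ₑ ≤ M) :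
    Integrable fun z ↦ b z * dbarInv (fun w ↦ conj (c w)) z * conj (m z) :=
  hb.integrable_mul_mul hc.measurable_dbarInv hc.enorm_dbarInv_le (by fun_prop)
    fun z ↦ (RCLike.enorm_conj _).trans_le (hM z)

namespace IsJostSolution

variable {ρ : ℂ → ℝ≥0∞} {Λ : ℝ≥0} {b m : ℂ → ℂ}

theorem eq_add (hm : IsJostSolution b m) (h : PotentialBound ρ Λ) (hb : DominatedBy ρ b) (z : ℂ) :
    m z = dbarInv b z + dbarInv (fun w ↦ b w * conj (m w)) z := by
  obtain ⟨M, hM⟩ := hm.bounded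
  have hbΛ := h.cauchyBound hb
  rw [← hbΛ.dbarInv_add (hbΛ.mul_conj hm.measurable hM), hm.eq z]
  simp only [mul_add, mul_one]

theorem weightedNorm_le (hm : IsJostSolution b m) (h : PotentialBound ρ Λ)
    (hb : DominatedBy ρ b) :
    weightedNorm ρ m ≤ solutionBound Λ * weightedNorm ρ (dbarInv b) := by
  obtain ⟨M, hM⟩ := hm.bounded
  exact h.weightedNorm_le_of_eq_add_dbarInv hb hm.measurable hM (hm.eq_add h hb)

section Difference

variable {b₁ b₂ δ m₁ m₂ : ℂ → ℂ} {D : ℝ}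

theorem differenceQuotient_eq (h₁ : IsJostSolution b₁ m₁) (h₂ : IsJostSolution b₂ m₂)
    (h : PotentialBound ρ Λ) (hb₁ : DominatedBy ρ b₁) (hb₂ : DominatedBy ρ b₂)
    (hδ : DominatedBy ρ δ) (hD : D ≠ 0) (hbδ : ∀ z, b₂ z = b₁ z + D * δ z) (z : ℂ) :
    (D : ℂ)⁻¹ * (m₂ z - m₁ z) = (dbarInv δ z + dbarInv (fun w ↦ δ w * conj (m₂ w)) z) +
      dbarInv (fun w ↦ b₁ w * conj ((D : ℂ)⁻¹ * (m₂ w - m₁ w))) z := by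
  obtain ⟨M₁, hM₁⟩ := h₁.bounded
  obtain ⟨M₂, hM₂⟩ := h₂.bounded
  have hb₁Λ := h.cauchyBound hb₁
  have hδΛ := h.cauchyBound hδ
  have hb₁m₁ := hb₁Λ.mul_conj h₁.measurable hM₁
  have hb₁m₂ := hb₁Λ.mul_conj h₂.measurable hM₂
  have hδm₂ := hδΛ.mul_conj h₂.measurable hM₂
  have linear_part : dbarInv b₂ z = dbarInv b₁ z + D * dbarInv δ z := by
    rw [funext hbδ, hb₁Λ.dbarInv_add_const_mul hδΛ]
  have nonlinear_part : dbarInv (fun w ↦ b₂ w * conj (m₂ w)) z =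
      dbarInv (fun w ↦ b₁ w * conj (m₂ w)) z + D * dbarInv (fun w ↦ δ w * conj (m₂ w)) z := by
    simp only [hbδ, add_mul, mul_assoc]
    exact hb₁m₂.dbarInv_add_const_mul hδm₂ D z
  have feedback : dbarInv (fun w ↦ b₁ w * conj ((D : ℂ)⁻¹ * (m₂ w - m₁ w))) z = (D : ℂ)⁻¹ *
      (dbarInv (fun w ↦ b₁ w * conj (m₂ w)) z - dbarInv (fun w ↦ b₁ w * conj (m₁ w)) z) := by
    rw [← hb₁m₂.dbarInv_sub hb₁m₁, ← dbarInv_const_mul]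
    simp only [map_mul, map_inv₀, conj_ofReal, map_sub, mul_sub, mul_left_comm (b₁ _)]
  rw [feedback, h₂.eq_add h hb₂, h₁.eq_add h hb₁, linear_part, nonlinear_part]
  field_simp [Complex.ofReal_ne_zero.2 hD]
  ring

theorem weightedNorm_differenceQuotient_le (h₁ : IsJostSolution b₁ m₁) (h₂ : IsJostSolution b₂ m₂)
    (h : PotentialBound ρ Λ) (hb₁ : DominatedBy ρ b₁) (hb₂ : DominatedBy ρ b₂)
    (hδ : DominatedBy ρ δ) (hD : D ≠ 0) (hbδ : ∀ z, b₂ z = b₁ z + D * δ z) :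
    weightedNorm ρ (fun z ↦ (D : ℂ)⁻¹ * (m₂ z - m₁ z)) ≤ solutionBound Λ *
      (weightedNorm ρ (dbarInv δ) + Λ * (solutionBound Λ * weightedNorm ρ (dbarInv b₂))) := by
  obtain ⟨M₁, hM₁⟩ := h₁.bounded
  obtain ⟨M₂, hM₂⟩ := h₂.bounded
  have hm₁ := h₁.measurable
  have hm₂ := h₂.measurable
  have quotient_le (z : ℂ) :
      ‖(D : ℂ)⁻¹ * (m₂ z - m₁ z)‖ₑ ≤ (‖(D : ℂ)⁻¹‖₊ * (M₂ + M₁) : ℝ≥0) := by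
    rw [enorm_mul, ENNReal.coe_mul, ENNReal.coe_add]
    exact mul_le_mul_right (enorm_sub_le.trans (add_le_add (hM₂ z) (hM₁ z))) _
  refine (h.weightedNorm_le_of_eq_add_dbarInv hb₁ (by fun_prop) quotient_le
    (h₁.differenceQuotient_eq h₂ h hb₁ hb₂ hδ hD hbδ)).trans (mul_le_mul_right ?_ _)
  have hδΛ := h.cauchyBound hδ
  refine (eLpNorm_add_le hδΛ.measurable_dbarInv.aestronglyMeasurable
    (hδΛ.mul_conj hm₂ hM₂).measurable_dbarInv.aestronglyMeasurable one_le_two).trans ?_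
  refine add_le_add le_rfl ((h.weightedNorm_dbarInv_mul_le hδ (by fun_prop)).trans ?_)
  refine mul_le_mul_right ?_ _
  rw [weightedNorm_conj]
  exact h₂.weightedNorm_le h hb₂

theorem jostPairing_sub_eq (h₁ : IsJostSolution b₁ m₁) (h₂ : IsJostSolution b₂ m₂)
    (h : PotentialBound ρ Λ) (hb₁ : DominatedBy ρ b₁) (hb₂ : DominatedBy ρ b₂)
    (hδ : DominatedBy ρ δ) (hD : D ≠ 0) (hbδ : ∀ z, b₂ z = b₁ z + D * δ z) :
    jostPairing b₂ m₂ - jostPairing b₁ m₁ =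
      D * ((∫ z, b₂ z * dbarInv (fun w ↦ conj (δ w)) z * conj (m₂ z)) +
        (∫ z, δ z * dbarInv (fun w ↦ conj (b₁ w)) z * conj (m₂ z)) +
        ∫ z, b₁ z * dbarInv (fun w ↦ conj (b₁ w)) z * conj ((D : ℂ)⁻¹ * (m₂ z - m₁ z))) := by
  obtain ⟨M₁, hM₁⟩ := h₁.bounded
  obtain ⟨M₂, hM₂⟩ := h₂.bounded
  have hm₁ := h₁.measurable
  have hm₂ := h₂.measurable
  have split_X (z : ℂ) : dbarInv (fun w ↦ conj (b₂ w)) z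
      = dbarInv (fun w ↦ conj (b₁ w)) z + D * dbarInv (fun w ↦ conj (δ w)) z := by
    simp only [hbδ, map_add, map_mul, conj_ofReal]
    exact (h.cauchyBound hb₁.conj_comp).dbarInv_add_const_mul (h.cauchyBound hδ.conj_comp) D z
  have h2δ2 := hb₂.integrable_mul_dbarInv_conj_mul_conj (h.cauchyBound hδ.conj_comp) hm₂ hM₂
  have hδ12 := hδ.integrable_mul_dbarInv_conj_mul_conj (h.cauchyBound hb₁.conj_comp) hm₂ hM₂
  have h112 := hb₁.integrable_mul_dbarInv_conj_mul_conj (h.cauchyBound hb₁.conj_comp) hm₂ hM₂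
  have h111 := hb₁.integrable_mul_dbarInv_conj_mul_conj (h.cauchyBound hb₁.conj_comp) hm₁ hM₁
  have quotient_term :
      ∫ z, b₁ z * dbarInv (fun w ↦ conj (b₁ w)) z * conj ((D : ℂ)⁻¹ * (m₂ z - m₁ z)) =
        (D : ℂ)⁻¹ * ((∫ z, b₁ z * dbarInv (fun w ↦ conj (b₁ w)) z * conj (m₂ z)) -
          jostPairing b₁ m₁) := by
    rw [jostPairing, ← integral_sub h112 h111, ← integral_const_mul]
    simp only [map_mul, map_inv₀, conj_ofReal, map_sub, mul_sub, mul_left_comm _ (D : ℂ)⁻¹]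
  have pairing₂ : jostPairing b₂ m₂ =
      D * (∫ z, b₂ z * dbarInv (fun w ↦ conj (δ w)) z * conj (m₂ z)) +
        (D * (∫ z, δ z * dbarInv (fun w ↦ conj (b₁ w)) z * conj (m₂ z)) +
          ∫ z, b₁ z * dbarInv (fun w ↦ conj (b₁ w)) z * conj (m₂ z)) := by
    rw [jostPairing, ← integral_const_mul, ← integral_const_mul,
      ← integral_add (hδ12.const_mul _) h112,
      ← integral_add (h2δ2.const_mul _) ((hδ12.const_mul _).fun_add h112)]
    refine integral_congr_ae (.of_forall fun z ↦ ?_)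
    simp only [split_X]
    rw [hbδ z]
    ring
  rw [quotient_term, pairing₂]
  field_simp [Complex.ofReal_ne_zero.2 hD]
  ring

theorem enorm_jostPairing_sub_le (h₁ : IsJostSolution b₁ m₁) (h₂ : IsJostSolution b₂ m₂)
    (h : PotentialBound ρ Λ) (hb₁ : DominatedBy ρ b₁) (hb₂ : DominatedBy ρ b₂)
    (hδ : DominatedBy ρ δ) (hD : D ≠ 0) (hbδ : ∀ z, b₂ z = b₁ z + D * δ z) {S : ℝ≥0∞}
    (hS₁ : scatteringSize ρ b₁ ≤ S) (hS₂ : scatteringSize ρ b₂ ≤ S)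
    (hSδ : scatteringSize ρ δ ≤ S) :
    ‖jostPairing b₂ m₂ - jostPairing b₁ m₁‖ₑ ≤ ‖(D : ℂ)‖ₑ * (pairingBound Λ * S ^ 2) := by
  have hm₁ := h₁.measurable
  have hm₂ := h₂.measurable
  have hX₁ := (h.cauchyBound hb₁.conj_comp).measurable_dbarInv
  have hXδ := (h.cauchyBound hδ.conj_comp).measurable_dbarInv
  have hwX₁ := le_add_self.trans hS₁
  have hwXδ := le_add_self.trans hSδ
  have hw₂ := le_self_add.trans hS₂
  have hwδ := le_self_add.trans hSδ
  have hwm₂ : weightedNorm ρ m₂ ≤ solutionBound Λ * S :=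
    (h₂.weightedNorm_le h hb₂).trans (mul_le_mul_right hw₂ _)
  have hwn : weightedNorm ρ (fun z ↦ (D : ℂ)⁻¹ * (m₂ z - m₁ z)) ≤
      solutionBound Λ * (S + Λ * (solutionBound Λ * S)) := by
    refine (h₁.weightedNorm_differenceQuotient_le h₂ h hb₁ hb₂ hδ hD hbδ).trans ?_
    gcongr
  have term_le {b f g : ℂ → ℂ} {N : ℝ≥0∞} (hb : DominatedBy ρ b) (hf : Measurable f)
      (hg : Measurable g) (hfS : weightedNorm ρ f ≤ S) (hgN : weightedNorm ρ g ≤ N) :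
      ‖∫ z, b z * f z * conj (g z)‖ₑ ≤ S * N :=
    (hb.enorm_integral_mul_mul_le h.measurable hf (by fun_prop)).trans
      (mul_le_mul' hfS ((weightedNorm_conj ρ g).trans_le hgN))
  rw [h₁.jostPairing_sub_eq h₂ h hb₁ hb₂ hδ hD hbδ, enorm_mul]
  refine mul_le_mul_right ((enorm_add_le _ _).trans (add_le_add
    ((enorm_add_le _ _).trans
      (add_le_add (term_le hb₂ hXδ hm₂ hwXδ hwm₂) (term_le hδ hX₁ hm₂ hwX₁ hwm₂)))
    (term_le hb₁ hX₁ (by fun_prop) hwX₁ hwn)) |>.trans_eq ?_) _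
  simp only [pairingBound, ENNReal.coe_add, ENNReal.coe_mul, ENNReal.coe_ofNat]
  ring

end Difference

end IsJostSolution

/-- The potential `e_{-k} q` of the scattering equations at frequency `k`. -/
def modulated (k : ℂ) (q : ℂ → ℂ) (z : ℂ) : ℂ := ek (-k) z * q z

theorem modulated_neg (k : ℂ) (q : ℂ → ℂ) :
    (modulated k fun z ↦ -q z) = fun z ↦ -modulated k q z :=
  funext fun _ ↦ mul_neg _ _

namespace IsScattering

variable {ρ : ℂ → ℝ≥0∞} {Λ B : ℝ≥0} {q u v : ℂ → ℂ} {k : ℂ}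

theorem exists_enorm_le (h : IsScattering q k u v) :
    ∃ M : ℝ≥0, (∀ z, ‖u z‖ₑ ≤ M) ∧ ∀ z, ‖v z‖ₑ ≤ M := by
  obtain ⟨-, hu, -, hv, -⟩ := h
  obtain ⟨M, hM⟩ := (hu.union hv).exists_norm_le
  refine ⟨M.toNNReal, fun z ↦ ?_, fun z ↦ ?_⟩
  · exact (ofReal_norm (u z)).symm.trans_le (ENNReal.ofReal_le_ofReal (hM _ (.inl ⟨z, rfl⟩)))
  · exact (ofReal_norm (v z)).symm.trans_le (ENNReal.ofReal_le_ofReal (hM _ (.inr ⟨z, rfl⟩)))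

theorem isJostSolution_add (h : IsScattering q k u v) (hq : CauchyBound (modulated k q) B) :
    IsJostSolution (modulated k q) (fun z ↦ u z - 1 + v z) := by
  obtain ⟨M, huM, hvM⟩ := h.exists_enorm_le
  obtain ⟨hu, -, hv, -, u_eq, v_eq⟩ := h
  refine ⟨by fun_prop, ⟨M + 1 + M, fun z ↦ ?_⟩, fun z ↦ ?_⟩
  · exact (enorm_add_le _ _).trans (add_le_add (enorm_sub_le.trans
      (add_le_add (huM z) enorm_one.le)) (hvM z))
  · calc u z - 1 + v z
        = dbarInv (fun w ↦ modulated k q w * conj (v w)) z +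
            dbarInv (fun w ↦ modulated k q w * conj (u w)) z := by
          rw [u_eq z, v_eq z, add_sub_cancel_left]
          rfl
      _ = _ := by
          rw [← (hq.mul_conj hv.measurable hvM).dbarInv_add (hq.mul_conj hu.measurable huM)]
          congr 1 with w
          simp only [map_add, map_sub, map_one]
          ring

theorem neg (h : IsScattering q k u v) : IsScattering (fun z ↦ -q z) k u (fun z ↦ -v z) := by
  obtain ⟨hu, hub, hv, hvb, u_eq, v_eq⟩ := h
  refine ⟨hu, hub, hv.neg, ?_, fun z ↦ ?_, fun z ↦ ?_⟩
  · exact hvb.neg.subset (Set.range_subset_iff.2 fun z ↦ Set.neg_mem_neg.2 ⟨z, rfl⟩)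
  · simpa only [map_neg, mul_neg, neg_mul, neg_neg] using u_eq z
  · simp only [v_eq z, ← dbarInv_neg, mul_neg, neg_mul]

theorem jostPairing_sub_jostPairing (h : IsScattering q k u v) (hρ : PotentialBound ρ Λ)
    (hq : DominatedBy ρ (modulated k q)) :
    jostPairing (modulated k q) (fun z ↦ u z - 1 + v z) -
      jostPairing (modulated k fun z ↦ -q z) (fun z ↦ u z - 1 + -v z) =
    2 * ∫ z, dbarInv (fun w ↦ conj (modulated k q w)) z * (modulated k q z * conj (v z)) := by
  have hX := hρ.cauchyBound hq.conj_comp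
  obtain ⟨M₁, hM₁⟩ := (h.isJostSolution_add (hρ.cauchyBound hq)).bounded
  have hneg : DominatedBy ρ (modulated k fun z ↦ -q z) := by
    rw [modulated_neg]
    exact hq.neg
  obtain ⟨M₂, hM₂⟩ := (h.neg.isJostSolution_add (hρ.cauchyBound hneg)).bounded
  obtain ⟨hu, -, hv, -⟩ := h
  rw [jostPairing, jostPairing, ← integral_sub
    (hq.integrable_mul_dbarInv_conj_mul_conj hX (by fun_prop) hM₁)
    (hneg.integrable_mul_dbarInv_conj_mul_conj (hρ.cauchyBound hneg.conj_comp) (by fun_prop) hM₂),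
    ← integral_const_mul]
  refine integral_congr_ae (.of_forall fun z ↦ ?_)
  simp only [modulated_neg, map_add, map_neg, dbarInv_neg]
  ring

theorem integral_mul_conj_eq (h : IsScattering q k u v) (hρ : PotentialBound ρ Λ)
    (hq : DominatedBy ρ (modulated k q)) :
    ∫ z, modulated k q z * conj (u z) = (∫ z, modulated k q z) -
      2⁻¹ * conj (jostPairing (modulated k q) (fun z ↦ u z - 1 + v z) -
        jostPairing (modulated k fun z ↦ -q z) (fun z ↦ u z - 1 + -v z)) := by
  rw [h.jostPairing_sub_jostPairing hρ hq]
  obtain ⟨M, huM, hvM⟩ := h.exists_enorm_le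
  obtain ⟨hu, -, hv, -, u_eq, -⟩ := h
  have hqv := (hρ.cauchyBound hq).mul_conj hv.measurable hvM
  have hqu : Integrable fun z ↦ modulated k q z * conj (u z) :=
    hq.integrable.mul_bdd (c := M) (by fun_prop) (.of_forall fun z ↦
      (RCLike.norm_conj _).trans_le (enorm_le_coe.1 (huM z)))
  have correction : ∫ z, modulated k q z * conj (u z) - modulated k q z = conj
      (∫ z, conj (modulated k q z) * dbarInv (fun w ↦ modulated k q w * conj (v w)) z) := by
    rw [← integral_conj]
    refine integral_congr_ae (.of_forall fun z ↦ ?_)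
    simp only [u_eq z, map_add, map_one, map_mul, conj_conj, mul_add, mul_one, add_sub_cancel_left]
    rfl
  rw [hqv.integral_mul_dbarInv hq.conj_comp.measurable hq.conj_comp.integrable,
    integral_sub hqu hq.integrable, sub_eq_iff_eq_add'] at correction
  rw [correction, map_neg, map_mul, Complex.conj_ofNat, inv_mul_cancel_left₀ two_ne_zero,
    sub_eq_add_neg]

end IsScattering

theorem enorm_I_div_two_pi_le_one : ‖Complex.I / (2 * (Real.pi : ℂ))‖ₑ ≤ 1 := by
  rw [← ofReal_norm, ENNReal.ofReal_le_one, norm_div, norm_I, norm_mul, Complex.norm_ofNat,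
    Complex.norm_of_nonneg Real.pi_pos.le, div_le_one (by positivity)]
  linarith [Real.pi_gt_three]

section Lipschitz

variable {ρ : ℂ → ℝ≥0∞} {Λ : ℝ≥0} {q₁ q₂ p : ℂ → ℂ} {k : ℂ} {D : ℝ}

theorem IsScattering.enorm_jostPairing_sub_le {u₁ u₂ v₁ v₂ : ℂ → ℂ}
    (h₁ : IsScattering q₁ k u₁ v₁) (h₂ : IsScattering q₂ k u₂ v₂) (hρ : PotentialBound ρ Λ)
    (hq₁ : DominatedBy ρ q₁) (hq₂ : DominatedBy ρ q₂) (hp : DominatedBy ρ p) (hD : D ≠ 0)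
    (hqp : ∀ z, q₂ z = q₁ z + D * p z) {S : ℝ≥0∞}
    (hS₁ : scatteringSize ρ (modulated k q₁) ≤ S) (hS₂ : scatteringSize ρ (modulated k q₂) ≤ S)
    (hSp : scatteringSize ρ (modulated k p) ≤ S) :
    ‖jostPairing (modulated k q₂) (fun z ↦ u₂ z - 1 + v₂ z) -
      jostPairing (modulated k q₁) (fun z ↦ u₁ z - 1 + v₁ z)‖ₑ ≤
      ‖(D : ℂ)‖ₑ * (pairingBound Λ * S ^ 2) := by
  have ha₁ : DominatedBy ρ (modulated k q₁) := hq₁.ek_mul (-k)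
  have ha₂ : DominatedBy ρ (modulated k q₂) := hq₂.ek_mul (-k)
  refine (h₁.isJostSolution_add (hρ.cauchyBound ha₁)).enorm_jostPairing_sub_le
    (h₂.isJostSolution_add (hρ.cauchyBound ha₂)) hρ ha₁ ha₂ (hp.ek_mul (-k)) hD
    (fun z ↦ ?_) hS₁ hS₂ hSp
  rw [modulated, modulated, hqp]
  ring

theorem IsScattering.enorm_integral_mul_conj_sub_le {u₁ u₂ v₁ v₂ : ℂ → ℂ}
    (h₁ : IsScattering q₁ k u₁ v₁) (h₂ : IsScattering q₂ k u₂ v₂)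
    (hρ : PotentialBound ρ Λ) (hq₁ : DominatedBy ρ q₁) (hq₂ : DominatedBy ρ q₂)
    (hp : DominatedBy ρ p) (hD : D ≠ 0) (hqp : ∀ z, q₂ z = q₁ z + D * p z) {S : ℝ≥0∞}
    (hS₁ : scatteringSize ρ (modulated k q₁) ≤ S) (hS₂ : scatteringSize ρ (modulated k q₂) ≤ S)
    (hSp : scatteringSize ρ (modulated k p) ≤ S) :
    ‖(∫ z, modulated k q₂ z * conj (u₂ z)) - ∫ z, modulated k q₁ z * conj (u₁ z)‖ₑ ≤
      ‖(D : ℂ)‖ₑ * (‖∫ z, modulated k p z‖ₑ + pairingBound Λ * S ^ 2) := by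
  have ha₁ : DominatedBy ρ (modulated k q₁) := hq₁.ek_mul (-k)
  have ha₂ : DominatedBy ρ (modulated k q₂) := hq₂.ek_mul (-k)
  have size_neg (q : ℂ → ℂ) : scatteringSize ρ (modulated k fun z ↦ -q z) =
      scatteringSize ρ (modulated k q) := by
    rw [modulated_neg, scatteringSize_neg]
  have pairing_pos := h₁.enorm_jostPairing_sub_le h₂ hρ hq₁ hq₂ hp hD hqp hS₁ hS₂ hSp
  have pairing_neg := h₁.neg.enorm_jostPairing_sub_le h₂.neg hρ hq₁.neg hq₂.neg hp.neg hD
    (fun z ↦ by rw [hqp, mul_neg, neg_add]) ((size_neg q₁).trans_le hS₁)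
    ((size_neg q₂).trans_le hS₂) ((size_neg p).trans_le hSp)
  have linear_part : (∫ z, modulated k q₂ z) - ∫ z, modulated k q₁ z =
      D * ∫ z, modulated k p z := by
    rw [← integral_sub ha₂.integrable ha₁.integrable, ← integral_const_mul]
    refine integral_congr_ae (.of_forall fun z ↦ ?_)
    simp only [modulated, hqp]
    ring
  have enorm_two : ‖(2 : ℂ)‖ₑ = 2 := by rw [← ofReal_norm, Complex.norm_ofNat, ENNReal.ofReal_ofNat]
  rw [h₁.integral_mul_conj_eq hρ ha₁, h₂.integral_mul_conj_eq hρ ha₂, sub_sub_sub_comm,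
    linear_part, ← mul_sub, ← map_sub, sub_sub_sub_comm, mul_add]
  refine enorm_sub_le.trans (add_le_add (enorm_mul _ _).le ?_)
  rw [enorm_mul, RCLike.enorm_conj, enorm_inv two_ne_zero, enorm_two,
    ENNReal.inv_mul_le_iff two_ne_zero ENNReal.ofNat_ne_top, two_mul]
  exact enorm_sub_le.trans (add_le_add pairing_pos pairing_neg)

theorem enorm_scatTransform_sub_le {u₁ u₂ : ℂ → ℂ → ℂ} {v₁ v₂ : ℂ → ℂ}
    (h₁ : IsScattering q₁ k (u₁ · k) v₁) (h₂ : IsScattering q₂ k (u₂ · k) v₂)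
    (hρ : PotentialBound ρ Λ) (hq₁ : DominatedBy ρ q₁) (hq₂ : DominatedBy ρ q₂)
    (hp : DominatedBy ρ p) (hD : D ≠ 0) (hqp : ∀ z, q₂ z = q₁ z + D * p z) {S : ℝ≥0∞}
    (hS₁ : scatteringSize ρ (modulated k q₁) ≤ S) (hS₂ : scatteringSize ρ (modulated k q₂) ≤ S)
    (hSp : scatteringSize ρ (modulated k p) ≤ S) :
    ‖scatTransform q₂ u₂ k - scatTransform q₁ u₁ k‖ₑ ≤
      ‖(D : ℂ)‖ₑ * (‖∫ z, modulated k p z‖ₑ + pairingBound Λ * S ^ 2) := by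
  simp only [scatTransform, ← mul_sub, enorm_mul]
  exact (mul_le_of_le_one_left' enorm_I_div_two_pi_le_one).trans
    (h₁.enorm_integral_mul_conj_sub_le h₂ hρ hq₁ hq₂ hp hD hqp hS₁ hS₂ hSp)

end Lipschitz

/-! ### Weighted Sobolev spaces and Kato bounds -/

section HssNorm

variable {s : ℝ} (q : ℂ → ℂ)

theorem enorm_ofReal_norm_rpow (hs : 0 ≤ s) (z : ℂ) : ‖((‖z‖ ^ s : ℝ) : ℂ)‖ₑ = ‖z‖ₑ ^ s := by
  rw [← ofReal_norm, Complex.norm_of_nonneg (by positivity),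
    ← ENNReal.ofReal_rpow_of_nonneg (norm_nonneg _) hs, ofReal_norm]

theorem lintegral_enorm_sq_le_HssNorm_sq (s : ℝ) : ∫⁻ z, ‖q z‖ₑ ^ 2 ≤ HssNorm s q ^ 2 := by
  rw [← eLpNorm_two_sq]
  exact pow_le_pow_left' (le_max_left _ _) 2

theorem lintegral_rpow_mul_enorm_FT_sq_le_HssNorm_sq (hs : 0 ≤ s) :
    ∫⁻ ξ, (‖ξ‖ₑ ^ s * ‖FT q ξ‖ₑ) ^ 2 ≤ HssNorm s q ^ 2 := by
  simp_rw [← enorm_ofReal_norm_rpow hs, ← enorm_mul]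
  rw [← eLpNorm_two_sq]
  exact pow_le_pow_left' ((le_max_left _ _).trans (le_max_right _ _)) 2

theorem lintegral_rpow_mul_enorm_sq_le_HssNorm_sq (hs : 0 ≤ s) :
    ∫⁻ z, (‖z‖ₑ ^ s * ‖q z‖ₑ) ^ 2 ≤ HssNorm s q ^ 2 := by
  simp_rw [← enorm_ofReal_norm_rpow hs, ← enorm_mul]
  rw [← eLpNorm_two_sq]
  exact pow_le_pow_left' ((le_max_right _ _).trans (le_max_right _ _)) 2

end HssNorm

theorem le_rpow_half_mul_of_sq_le {x y c : ℝ≥0∞} (h : x ^ 2 ≤ c * y ^ 2) :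
    x ≤ c ^ (1 / 2 : ℝ) * y := by
  have hc : (c ^ (1 / 2 : ℝ)) ^ 2 = c := by simp [ennreal_rpow_sq]
  rwa [← ENNReal.pow_le_pow_left_iff two_ne_zero, mul_pow, hc]

section Frequency

variable {f g : ℂ → ℂ}

theorem FTinv_add (hf : Integrable f) (hg : Integrable g) : FTinv (f + g) = FTinv f + FTinv g := by
  ext x
  have convergent {h : ℂ → ℂ} (hh : Integrable h) :
      Integrable fun ξ ↦ Real.fourierChar (inner ℝ ξ x) • h ξ := by
    simpa using (Real.fourierIntegral_convergent_iff (-x)).2 hh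
  simp only [FTinv_eq_fourierInv, Pi.add_apply, Real.fourierInv_eq, smul_add]
  exact integral_add (convergent hf) (convergent hg)

theorem enorm_FTinv_le (f : ℂ → ℂ) (x : ℂ) : ‖FTinv f x‖ₑ ≤ ∫⁻ ξ, ‖f ξ‖ₑ := by
  rw [FTinv_eq_fourierInv, Real.fourierInv_eq]
  refine (enorm_integral_le_lintegral_enorm _).trans_eq (lintegral_congr fun ξ ↦ ?_)
  rw [← ofReal_norm, Circle.norm_smul, ofReal_norm]

theorem FourierInvertible.FTinv_indicator_add_FTinv_indicator_compl {q : ℂ → ℂ}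
    (hq : FourierInvertible q) {A : Set ℂ} (hA : MeasurableSet A) :
    FTinv (A.indicator (FT q)) + FTinv (Aᶜ.indicator (FT q)) = q := by
  rw [← FTinv_add (hq.integrable_FT.indicator hA) (hq.integrable_FT.indicator hA.compl),
    Set.indicator_self_add_compl, hq.FTinv_FT]

theorem lintegral_ball_enorm_rpow {a r : ℝ} (hr : 0 < r) :
    ∫⁻ ξ : ℂ in Metric.ball 0 r, ‖ξ‖ₑ ^ a =
      ENNReal.ofReal r ^ (2 + a) * ∫⁻ ξ : ℂ in Metric.ball 0 1, ‖ξ‖ₑ ^ a := by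
  have hr' : ENNReal.ofReal r ≠ 0 := by simpa using hr
  have scaling (x : ℂ) : (Metric.ball (0 : ℂ) r).indicator (fun ξ : ℂ ↦ ‖ξ‖ₑ ^ a) (r • x) =
      ENNReal.ofReal r ^ a * (Metric.ball (0 : ℂ) 1).indicator (fun ξ : ℂ ↦ ‖ξ‖ₑ ^ a) x := by
    have hmem : r • x ∈ Metric.ball (0 : ℂ) r ↔ x ∈ Metric.ball (0 : ℂ) 1 := by
      rw [mem_ball_zero_iff, mem_ball_zero_iff, norm_smul, Real.norm_of_nonneg hr.le]
      exact mul_lt_iff_lt_one_right hr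
    by_cases hx : x ∈ Metric.ball (0 : ℂ) 1
    · rw [Set.indicator_of_mem hx, Set.indicator_of_mem (hmem.2 hx), enorm_smul,
        Real.enorm_of_nonneg hr.le, ENNReal.mul_rpow_of_ne_top (by simp) (by simp)]
    · rw [Set.indicator_of_notMem hx, Set.indicator_of_notMem (mt hmem.1 hx), mul_zero]
  have h := lintegral_comp_smul volume
    ((Metric.ball (0 : ℂ) r).indicator fun ξ : ℂ ↦ ‖ξ‖ₑ ^ a) hr.ne'
  simp_rw [scaling] at h
  rw [lintegral_const_mul' _ _ (by finiteness), lintegral_indicator measurableSet_ball,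
    lintegral_indicator measurableSet_ball, finrank_real_complex, abs_of_pos (by positivity)] at h
  rw [ENNReal.rpow_add _ _ hr' (by simp), mul_assoc, h, ← mul_assoc, ENNReal.rpow_two,
    ← ENNReal.ofReal_pow hr.le, ← ENNReal.ofReal_mul (by positivity),
    mul_inv_cancel₀ (by positivity), ENNReal.ofReal_one, one_mul]

theorem enorm_FTinv_indicator_ball_sq_le (hf : Measurable f) (s : ℝ) {r : ℝ} (hr : 0 < r) (x : ℂ) :
    ‖FTinv ((Metric.ball 0 r).indicator f) x‖ₑ ^ 2 ≤
      ENNReal.ofReal r ^ (2 - 2 * s) * (∫⁻ ξ : ℂ in Metric.ball 0 1, ‖ξ‖ₑ ^ (-2 * s)) *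
        ∫⁻ ξ, (‖ξ‖ₑ ^ s * ‖f ξ‖ₑ) ^ 2 := by
  have insert_weight : ‖FTinv ((Metric.ball 0 r).indicator f) x‖ₑ ≤
      ∫⁻ ξ in Metric.ball 0 r, ‖ξ‖ₑ ^ (-s) * (‖ξ‖ₑ ^ s * ‖f ξ‖ₑ) := by
    refine (enorm_FTinv_le _ x).trans ?_
    simp_rw [enorm_indicator_eq_indicator_enorm]
    rw [lintegral_indicator measurableSet_ball]
    refine lintegral_mono_ae (ae_restrict_of_ae ?_)
    filter_upwards [compl_mem_ae_iff.2 (measure_singleton (0 : ℂ))] with ξ hξ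
    rw [← mul_assoc, ← ENNReal.rpow_add _ _ (by simpa using hξ) (by simp), neg_add_cancel,
      ENNReal.rpow_zero, one_mul]
  calc ‖FTinv ((Metric.ball 0 r).indicator f) x‖ₑ ^ 2
      ≤ (∫⁻ ξ in Metric.ball 0 r, ‖ξ‖ₑ ^ (-s) * (‖ξ‖ₑ ^ s * ‖f ξ‖ₑ)) ^ 2 :=
        pow_le_pow_left' insert_weight 2
    _ ≤ (∫⁻ ξ in Metric.ball 0 r, (‖ξ‖ₑ ^ (-s)) ^ 2) *
          ∫⁻ ξ in Metric.ball 0 r, (‖ξ‖ₑ ^ s * ‖f ξ‖ₑ) ^ 2 :=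
        sq_lintegral_mul_le (by fun_prop) (by fun_prop)
    _ ≤ (∫⁻ ξ : ℂ in Metric.ball 0 r, ‖ξ‖ₑ ^ (-2 * s)) * ∫⁻ ξ, (‖ξ‖ₑ ^ s * ‖f ξ‖ₑ) ^ 2 := by
        simp_rw [ennreal_rpow_sq, mul_neg, neg_mul]
        gcongr
        exact Measure.restrict_le_self
    _ = _ := by rw [lintegral_ball_enorm_rpow hr, neg_mul, sub_eq_add_neg]

theorem lintegral_enorm_FTinv_indicator_compl_ball_sq_le (hf : Integrable f) (hfm : Measurable f)
    {s r : ℝ} (hs : 0 ≤ s) (hr : 0 < r) :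
    ∫⁻ x, ‖FTinv ((Metric.ball 0 r)ᶜ.indicator f) x‖ₑ ^ 2 ≤
      ENNReal.ofReal r ^ (-2 * s) * ∫⁻ ξ, (‖ξ‖ₑ ^ s * ‖f ξ‖ₑ) ^ 2 := by
  refine (lintegral_enorm_FTinv_sq_le (hf.indicator measurableSet_ball.compl)).trans ?_
  rw [← lintegral_const_mul _ (by fun_prop)]
  refine lintegral_mono fun ξ ↦ ?_
  by_cases hξ : ξ ∈ Metric.ball 0 r
  · simp [hξ]
  have one_le : 1 ≤ ENNReal.ofReal r ^ (-2 * s) * ‖ξ‖ₑ ^ (2 * s) := by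
    have hrξ : ENNReal.ofReal r ≤ ‖ξ‖ₑ := by
      rw [← ofReal_norm]
      exact ENNReal.ofReal_le_ofReal (by simpa using hξ)
    calc (1 : ℝ≥0∞) = ENNReal.ofReal r ^ (-2 * s) * ENNReal.ofReal r ^ (2 * s) := by
          rw [← ENNReal.rpow_add _ _ (by simpa using hr) (by simp)]
          simp
      _ ≤ _ := by gcongr
  rw [Set.indicator_of_mem (Set.mem_compl hξ), mul_pow, ← mul_assoc, ennreal_rpow_sq]
  exact le_mul_of_one_le_left zero_le one_le

end Frequency

theorem sq_setLIntegral_enorm_add_le {α E : Type*} [MeasurableSpace α] [NormedAddCommGroup E]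
    {μ : Measure α} {f g : α → E} (A : Set α) {L : ℝ≥0∞}
    (hfg : AEMeasurable (fun x ↦ ‖f x + g x‖ₑ) μ) (hf : ∀ x, ‖f x‖ₑ ^ 2 ≤ L) :
    (∫⁻ x in A, ‖f x + g x‖ₑ ∂μ) ^ 2 ≤ 2 * μ A * (L * μ A + ∫⁻ x, ‖g x‖ₑ ^ 2 ∂μ) := by
  calc (∫⁻ x in A, ‖f x + g x‖ₑ ∂μ) ^ 2
      = (∫⁻ x in A, 1 * ‖f x + g x‖ₑ ∂μ) ^ 2 := by simp only [one_mul]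
    _ ≤ (∫⁻ _ in A, 1 ^ 2 ∂μ) * ∫⁻ x in A, ‖f x + g x‖ₑ ^ 2 ∂μ :=
        sq_lintegral_mul_le aemeasurable_const hfg.restrict
    _ ≤ μ A * ∫⁻ x in A, 2 * (L + ‖g x‖ₑ ^ 2) ∂μ := by
        rw [one_pow, setLIntegral_one]
        gcongr with x
        calc ‖f x + g x‖ₑ ^ 2 ≤ (‖f x‖ₑ + ‖g x‖ₑ) ^ 2 := pow_le_pow_left' (enorm_add_le _ _) 2
          _ ≤ 2 * (‖f x‖ₑ ^ 2 + ‖g x‖ₑ ^ 2) := ennreal_add_sq_le _ _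
          _ ≤ 2 * (L + ‖g x‖ₑ ^ 2) := by gcongr; exact hf x
    _ ≤ μ A * (2 * (L * μ A + ∫⁻ x, ‖g x‖ₑ ^ 2 ∂μ)) := by
        rw [lintegral_const_mul' _ _ (by simp), lintegral_add_left measurable_const,
          setLIntegral_const]
        gcongr
        exact Measure.restrict_le_self
    _ = _ := by ring

-- The frequencies below and above `1 / r` are estimated in `L^∞` and `L²` respectively.
theorem FourierInvertible.sq_lintegral_closedBall_le {q : ℂ → ℂ} (hq : FourierInvertible q)
    {s r : ℝ} (hs : 0 ≤ s) (hr : 0 < r) (z : ℂ) :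
    (∫⁻ v in Metric.closedBall z r, ‖q v‖ₑ) ^ 2 ≤
      2 * volume (Metric.closedBall z r) *
        (ENNReal.ofReal r ^ (-2 + 2 * s) * (∫⁻ ξ : ℂ in Metric.ball 0 1, ‖ξ‖ₑ ^ (-2 * s)) *
            HssNorm s q ^ 2 * volume (Metric.closedBall z r) +
          ENNReal.ofReal r ^ (2 * s) * HssNorm s q ^ 2) := by
  have hinv (a : ℝ) : ENNReal.ofReal r⁻¹ ^ a = ENNReal.ofReal r ^ (-a) := by
    rw [ENNReal.ofReal_inv_of_pos hr, ENNReal.inv_rpow, ENNReal.rpow_neg]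
  set f := FTinv ((Metric.ball 0 r⁻¹).indicator (FT q))
  set g := FTinv ((Metric.ball 0 r⁻¹)ᶜ.indicator (FT q))
  have split (x : ℂ) : q x = f x + g x := by
    rw [← Pi.add_apply, hq.FTinv_indicator_add_FTinv_indicator_compl measurableSet_ball]
  have low (x : ℂ) : ‖f x‖ₑ ^ 2 ≤ ENNReal.ofReal r ^ (-2 + 2 * s) *
      (∫⁻ ξ : ℂ in Metric.ball 0 1, ‖ξ‖ₑ ^ (-2 * s)) * HssNorm s q ^ 2 := by
    refine (enorm_FTinv_indicator_ball_sq_le hq.continuous_FT.measurable s (inv_pos.2 hr)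
      x).trans ?_
    rw [hinv, neg_sub, sub_eq_neg_add]
    gcongr
    exact lintegral_rpow_mul_enorm_FT_sq_le_HssNorm_sq q hs
  have high : ∫⁻ x, ‖g x‖ₑ ^ 2 ≤ ENNReal.ofReal r ^ (2 * s) * HssNorm s q ^ 2 := by
    refine (lintegral_enorm_FTinv_indicator_compl_ball_sq_le hq.integrable_FT
      hq.continuous_FT.measurable hs (inv_pos.2 hr)).trans ?_
    rw [hinv, neg_mul, neg_neg]
    gcongr
    exact lintegral_rpow_mul_enorm_FT_sq_le_HssNorm_sq q hs
  simp_rw [split]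
  refine (sq_setLIntegral_enorm_add_le _ ?_ low).trans (by gcongr)
  simpa only [← split] using hq.continuous.measurable.enorm.aemeasurable

theorem exists_sq_lintegral_closedBall_le {s : ℝ} (hs : 0 ≤ s) (hs1 : s < 1) :
    ∃ C : ℝ≥0, ∀ q : ℂ → ℂ, FourierInvertible q → ∀ (z : ℂ) {r : ℝ}, 0 < r →
      (∫⁻ v in Metric.closedBall z r, ‖q v‖ₑ) ^ 2 ≤
        C * (ENNReal.ofReal r ^ (2 + 2 * s) * HssNorm s q ^ 2) := by
  set I : ℝ≥0∞ := ∫⁻ ξ : ℂ in Metric.ball 0 1, ‖ξ‖ₑ ^ (-2 * s)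
  have hI : I ≠ ⊤ := (lintegral_ball_enorm_rpow_lt_top volume
    (by rw [finrank_real_complex]; push_cast; linarith)).ne
  set p : ℝ≥0∞ := ((NNReal.pi : ℝ≥0) : ℝ≥0∞)
  refine ⟨(2 * p * (p * I + 1)).toNNReal, fun q hq z r hr ↦ ?_⟩
  rw [ENNReal.coe_toNNReal (by finiteness)]
  set S := HssNorm s q
  set ρ := ENNReal.ofReal r with hρ
  have hρ0 : ρ ≠ 0 := by simpa [hρ] using hr
  have hρt : ρ ≠ ⊤ := ENNReal.ofReal_ne_top
  have volume_closedBall : volume (Metric.closedBall z r) = ρ ^ (2 : ℝ) * p := by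
    rw [Complex.volume_closedBall, ENNReal.rpow_two]
  calc (∫⁻ v in Metric.closedBall z r, ‖q v‖ₑ) ^ 2
      ≤ 2 * (ρ ^ (2 : ℝ) * p) * (ρ ^ (-2 + 2 * s) * I * S ^ 2 * (ρ ^ (2 : ℝ) * p) +
          ρ ^ (2 * s) * S ^ 2) := by
        rw [← volume_closedBall]
        exact hq.sq_lintegral_closedBall_le hs hr z
    _ = 2 * p * (p * (ρ ^ (-2 + 2 * s) * ρ ^ (2 : ℝ)) * I + ρ ^ (2 * s)) *
          (ρ ^ (2 : ℝ) * S ^ 2) := by ring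
    _ = _ := by
        rw [← ENNReal.rpow_add _ _ hρ0 hρt, ENNReal.rpow_add 2 _ hρ0 hρt,
          show -2 + 2 * s + 2 = 2 * s by ring]
        ring

section Near

variable {V : Type*} [NormedAddCommGroup V] {a : ℝ}

theorem enorm_sub_rpow_le_tsum_indicator (ha : a ≤ 0) {z v : V} (hv : v ∈ Metric.closedBall z 1)
    (hvz : v ≠ z) :
    ‖z - v‖ₑ ^ a ≤ ∑' j : ℕ, (Metric.closedBall z (2⁻¹ ^ j)).indicator
      (fun _ ↦ ((2⁻¹ : ℝ≥0∞) ^ (j + 1)) ^ a) v := by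
  obtain ⟨n, hn, hn'⟩ := exists_nat_pow_near_of_lt_one (norm_pos_iff.2 (sub_ne_zero.2 hvz.symm))
    (mem_closedBall_iff_norm'.1 hv) (y := (2⁻¹ : ℝ)) (by norm_num) (by norm_num)
  refine le_trans ?_ (ENNReal.le_tsum n)
  rw [Set.indicator_of_mem (mem_closedBall_iff_norm'.2 hn')]
  refine ennreal_rpow_le_rpow_of_nonpos ?_ ha
  calc (2⁻¹ : ℝ≥0∞) ^ (n + 1) = ENNReal.ofReal (2⁻¹ ^ (n + 1)) := by
        rw [ENNReal.ofReal_pow (by norm_num), ENNReal.ofReal_inv_of_pos two_pos,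
          ENNReal.ofReal_ofNat]
    _ ≤ ‖z - v‖ₑ := by
        rw [← ofReal_norm]
        exact ENNReal.ofReal_le_ofReal hn.le

theorem lintegral_closedBall_mul_enorm_sub_rpow_le [MeasurableSpace V] [BorelSpace V]
    (μ : Measure V) [NullSingletonClass μ] {f : V → ℝ≥0∞} (hf : Measurable f) (ha : a ≤ 0) (z : V) :
    ∫⁻ v in Metric.closedBall z 1, f v * ‖z - v‖ₑ ^ a ∂μ ≤
      ∑' j : ℕ, ((2⁻¹ : ℝ≥0∞) ^ (j + 1)) ^ a * ∫⁻ v in Metric.closedBall z (2⁻¹ ^ j), f v ∂μ := by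
  have indicator_mul (j : ℕ) (v : V) :
      f v * (Metric.closedBall z (2⁻¹ ^ j)).indicator (fun _ ↦ ((2⁻¹ : ℝ≥0∞) ^ (j + 1)) ^ a) v =
        (Metric.closedBall z (2⁻¹ ^ j)).indicator (fun v ↦ (2⁻¹ ^ (j + 1)) ^ a * f v) v := by
    rw [mul_comm, ← Set.indicator_mul_left]
  calc ∫⁻ v in Metric.closedBall z 1, f v * ‖z - v‖ₑ ^ a ∂μ
      ≤ ∫⁻ v in Metric.closedBall z 1, ∑' j : ℕ, (Metric.closedBall z (2⁻¹ ^ j)).indicator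
          (fun v ↦ (2⁻¹ ^ (j + 1)) ^ a * f v) v ∂μ := by
        refine lintegral_mono_ae ?_
        filter_upwards [ae_restrict_mem measurableSet_closedBall,
          ae_restrict_of_ae (compl_mem_ae_iff.2 (measure_singleton z))] with v hv hvz
        simp_rw [← indicator_mul, ENNReal.tsum_mul_left]
        exact mul_le_mul_right (enorm_sub_rpow_le_tsum_indicator ha hv hvz) _
    _ ≤ ∫⁻ v, ∑' j : ℕ, (Metric.closedBall z (2⁻¹ ^ j)).indicator
          (fun v ↦ (2⁻¹ ^ (j + 1)) ^ a * f v) v ∂μ := setLIntegral_le_lintegral _ _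
    _ = _ := by
        rw [lintegral_tsum fun j ↦
          ((hf.const_mul _).indicator measurableSet_closedBall).aemeasurable]
        simp_rw [lintegral_indicator measurableSet_closedBall, lintegral_const_mul _ hf]

end Near

theorem exists_lintegral_closedBall_mul_enorm_sub_rpow_le {s : ℝ} (hs : 0 < s) (hs1 : s < 1) :
    ∃ C : ℝ≥0, ∀ q : ℂ → ℂ, FourierInvertible q → ∀ z : ℂ,
      ∫⁻ v in Metric.closedBall z 1, ‖q v‖ₑ * ‖z - v‖ₑ ^ (-1 - s / 2) ≤ C * HssNorm s q := by
  obtain ⟨C, hC⟩ := exists_sq_lintegral_closedBall_le hs.le hs1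
  set η : ℝ≥0∞ := 2⁻¹ with hη
  have hη0 : η ≠ 0 := by simp [hη]
  have hηt : η ≠ ⊤ := by simp [hη]
  have hη1 : η ^ (s / 2) < 1 := ENNReal.rpow_lt_one (by simp [hη]) (by linarith)
  have hgeom : (1 - η ^ (s / 2))⁻¹ ≠ ⊤ := ENNReal.inv_ne_top.2 (tsub_pos_of_lt hη1).ne'
  set K := (C : ℝ≥0∞) ^ (1 / 2 : ℝ)
  refine ⟨(K * η ^ (-1 - s / 2) * (1 - η ^ (s / 2))⁻¹).toNNReal, fun q hq z ↦ ?_⟩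
  rw [ENNReal.coe_toNNReal (by finiteness)]
  set S := HssNorm s q
  have ball_le (j : ℕ) :
      ∫⁻ v in Metric.closedBall z (2⁻¹ ^ j), ‖q v‖ₑ ≤ K * ((η ^ j) ^ (1 + s) * S) := by
    refine le_rpow_half_mul_of_sq_le ((hC q hq z (by positivity)).trans_eq ?_)
    rw [mul_pow, ennreal_rpow_sq, ENNReal.ofReal_pow (by norm_num),
      ENNReal.ofReal_inv_of_pos two_pos, ENNReal.ofReal_ofNat, mul_add, mul_one]
  have exponent (j : ℕ) : (η ^ (j + 1)) ^ (-1 - s / 2) * (η ^ j) ^ (1 + s) =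
      η ^ (-1 - s / 2) * (η ^ (s / 2)) ^ j := by
    simp_rw [← ENNReal.rpow_natCast, ← ENNReal.rpow_mul]
    rw [← ENNReal.rpow_add _ _ hη0 hηt, ← ENNReal.rpow_add _ _ hη0 hηt]
    congr 1
    push_cast
    ring
  calc ∫⁻ v in Metric.closedBall z 1, ‖q v‖ₑ * ‖z - v‖ₑ ^ (-1 - s / 2)
      ≤ ∑' j : ℕ, (η ^ (j + 1)) ^ (-1 - s / 2) *
          ∫⁻ v in Metric.closedBall z (2⁻¹ ^ j), ‖q v‖ₑ :=
        lintegral_closedBall_mul_enorm_sub_rpow_le volume hq.continuous.measurable.enorm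
          (by linarith) z
    _ ≤ ∑' j : ℕ, (η ^ (j + 1)) ^ (-1 - s / 2) * (K * ((η ^ j) ^ (1 + s) * S)) :=
        ENNReal.tsum_le_tsum fun j ↦ mul_le_mul_right (ball_le j) _
    _ = ∑' j : ℕ, K * S * (η ^ (-1 - s / 2) * (η ^ (s / 2)) ^ j) := by
        congr! 2 with j
        rw [← exponent]
        ring
    _ = _ := by
        rw [ENNReal.tsum_mul_left, ENNReal.tsum_mul_left, ENNReal.tsum_geometric]
        ring

theorem lintegral_compl_closedBall_comp_sub_le {V : Type*} [NormedAddCommGroup V]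
    [MeasurableSpace V] [BorelSpace V] (μ : Measure V) [μ.IsAddLeftInvariant]
    [μ.IsNegInvariant] (f : V → ℝ≥0∞) (z : V) (r : ℝ) :
    ∫⁻ v in (Metric.closedBall z r)ᶜ, f (z - v) ∂μ ≤ ∫⁻ v in (Metric.ball 0 r)ᶜ, f v ∂μ := by
  rw [← lintegral_indicator measurableSet_closedBall.compl,
    ← lintegral_indicator measurableSet_ball.compl,
    ← lintegral_sub_left_eq_self ((Metric.ball (0 : V) r)ᶜ.indicator f) z]
  refine lintegral_mono fun v ↦ ?_
  by_cases hv : v ∈ (Metric.closedBall z r)ᶜ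
  · have hzv : z - v ∈ (Metric.ball (0 : V) r)ᶜ := by
      rw [Set.mem_compl_iff, mem_closedBall_iff_norm', not_le] at hv
      rw [Set.mem_compl_iff, mem_ball_zero_iff, not_lt]
      exact hv.le
    rw [Set.indicator_of_mem hv, Set.indicator_of_mem hzv]
  · rw [Set.indicator_of_notMem hv]
    exact zero_le

theorem exists_lintegral_compl_closedBall_sq_kernel_le {s : ℝ} (hs : 0 < s) (hs2 : s < 2) :
    ∃ C : ℝ≥0, ∀ z : ℂ, ∫⁻ v in (Metric.closedBall z 1)ᶜ,
      (‖z - v‖ₑ ^ (-1 + s / 2) * (1 + ‖v‖ₑ) ^ (-s)) ^ 2 ≤ C := by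
  have hlt : -2 - s < -Module.finrank ℝ ℂ := by
    rw [finrank_real_complex]
    push_cast
    linarith
  have h₁ := (lintegral_compl_ball_enorm_rpow_lt_top (volume : Measure ℂ) hlt).ne
  have h₂ := (lintegral_one_add_enorm_rpow_lt_top (volume : Measure ℂ) hlt).ne
  set J₁ : ℝ≥0∞ := ∫⁻ x : ℂ in (Metric.ball 0 1)ᶜ, ‖x‖ₑ ^ (-2 - s)
  set J₂ : ℝ≥0∞ := ∫⁻ x : ℂ, (1 + ‖x‖ₑ) ^ (-2 - s)
  refine ⟨(J₁ + J₂).toNNReal, fun z ↦ ?_⟩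
  rw [ENNReal.coe_toNNReal (by finiteness)]
  calc ∫⁻ v in (Metric.closedBall z 1)ᶜ, (‖z - v‖ₑ ^ (-1 + s / 2) * (1 + ‖v‖ₑ) ^ (-s)) ^ 2
      ≤ ∫⁻ v in (Metric.closedBall z 1)ᶜ, (‖z - v‖ₑ ^ (-2 - s) + (1 + ‖v‖ₑ) ^ (-2 - s)) := by
        refine lintegral_mono fun v ↦ ?_
        rw [mul_pow, ennreal_rpow_sq, ennreal_rpow_sq]
        convert ennreal_rpow_mul_rpow_le_add (by simp : ‖z - v‖ₑ ≠ ⊤)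
          (by simp : 1 + ‖v‖ₑ ≠ ⊤) (a := 2 * (-1 + s / 2)) (b := 2 * -s)
          (by linarith) (by linarith) using 3 <;> ring
    _ = (∫⁻ v in (Metric.closedBall z 1)ᶜ, ‖z - v‖ₑ ^ (-2 - s)) +
          ∫⁻ v in (Metric.closedBall z 1)ᶜ, (1 + ‖v‖ₑ) ^ (-2 - s) :=
        lintegral_add_left (by fun_prop) _
    _ ≤ J₁ + J₂ := add_le_add
        (lintegral_compl_closedBall_comp_sub_le volume (fun x ↦ ‖x‖ₑ ^ (-2 - s)) z 1)
        (setLIntegral_le_lintegral _ _)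

theorem lintegral_one_add_rpow_mul_enorm_sq_le {q : ℂ → ℂ} (hq : Measurable q) {s : ℝ}
    (hs : 0 ≤ s) (hs1 : s ≤ 1) :
    ∫⁻ v, ((1 + ‖v‖ₑ) ^ s * ‖q v‖ₑ) ^ 2 ≤ 4 * HssNorm s q ^ 2 := by
  have weight_le (v : ℂ) : (1 + ‖v‖ₑ) ^ s ≤ 1 + ‖v‖ₑ ^ s := by
    simpa using ENNReal.rpow_add_le_add_rpow 1 ‖v‖ₑ hs hs1
  calc ∫⁻ v, ((1 + ‖v‖ₑ) ^ s * ‖q v‖ₑ) ^ 2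
      ≤ ∫⁻ v, 2 * (‖q v‖ₑ ^ 2 + (‖v‖ₑ ^ s * ‖q v‖ₑ) ^ 2) := by
        refine lintegral_mono fun v ↦ ?_
        calc ((1 + ‖v‖ₑ) ^ s * ‖q v‖ₑ) ^ 2 ≤ ((1 + ‖v‖ₑ ^ s) * ‖q v‖ₑ) ^ 2 :=
              pow_le_pow_left' (mul_le_mul_left (weight_le v) _) 2
          _ = (‖q v‖ₑ + ‖v‖ₑ ^ s * ‖q v‖ₑ) ^ 2 := by rw [add_mul, one_mul]
          _ ≤ _ := ennreal_add_sq_le _ _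
    _ = 2 * ((∫⁻ v, ‖q v‖ₑ ^ 2) + ∫⁻ v, (‖v‖ₑ ^ s * ‖q v‖ₑ) ^ 2) := by
        rw [lintegral_const_mul _ (by fun_prop), lintegral_add_left (by fun_prop)]
    _ ≤ 2 * (HssNorm s q ^ 2 + HssNorm s q ^ 2) := by
        gcongr
        · exact lintegral_enorm_sq_le_HssNorm_sq q s
        · exact lintegral_rpow_mul_enorm_sq_le_HssNorm_sq q hs
    _ = 4 * HssNorm s q ^ 2 := by ring

theorem exists_lintegral_compl_closedBall_mul_enorm_sub_rpow_le {s : ℝ} (hs : 0 < s)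
    (hs1 : s ≤ 1) :
    ∃ C : ℝ≥0, ∀ q : ℂ → ℂ, Measurable q → ∀ z : ℂ,
      ∫⁻ v in (Metric.closedBall z 1)ᶜ, ‖q v‖ₑ * ‖z - v‖ₑ ^ (-1 + s / 2) ≤ C * HssNorm s q := by
  obtain ⟨C, hC⟩ := exists_lintegral_compl_closedBall_sq_kernel_le hs (hs1.trans_lt one_lt_two)
  refine ⟨((C * 4 : ℝ≥0∞) ^ (1 / 2 : ℝ)).toNNReal, fun q hq z ↦ ?_⟩
  rw [ENNReal.coe_toNNReal (by finiteness)]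
  refine le_rpow_half_mul_of_sq_le ?_
  have insert_weight (v : ℂ) : ‖q v‖ₑ * ‖z - v‖ₑ ^ (-1 + s / 2) =
      (‖z - v‖ₑ ^ (-1 + s / 2) * (1 + ‖v‖ₑ) ^ (-s)) * ((1 + ‖v‖ₑ) ^ s * ‖q v‖ₑ) := by
    have cancel : (1 + ‖v‖ₑ) ^ (-s) * (1 + ‖v‖ₑ) ^ s = 1 := by
      rw [← ENNReal.rpow_add _ _ (by simp) (by simp), neg_add_cancel, ENNReal.rpow_zero]
    rw [mul_assoc, ← mul_assoc (_ ^ (-s)), cancel, one_mul, mul_comm]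
  simp_rw [insert_weight]
  calc (∫⁻ v in (Metric.closedBall z 1)ᶜ,
        (‖z - v‖ₑ ^ (-1 + s / 2) * (1 + ‖v‖ₑ) ^ (-s)) * ((1 + ‖v‖ₑ) ^ s * ‖q v‖ₑ)) ^ 2
      ≤ (∫⁻ v in (Metric.closedBall z 1)ᶜ, (‖z - v‖ₑ ^ (-1 + s / 2) * (1 + ‖v‖ₑ) ^ (-s)) ^ 2) *
          ∫⁻ v in (Metric.closedBall z 1)ᶜ, ((1 + ‖v‖ₑ) ^ s * ‖q v‖ₑ) ^ 2 :=
        sq_lintegral_mul_le (by fun_prop) (by fun_prop)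
    _ ≤ C * (4 * HssNorm s q ^ 2) := by
        gcongr
        · exact hC z
        · exact (setLIntegral_le_lintegral _ _).trans
            (lintegral_one_add_rpow_mul_enorm_sq_le hq hs.le hs1)
    _ = C * 4 * HssNorm s q ^ 2 := by ring

theorem KatoBound.of_closedBall_of_compl {t : ℝ} {ρ : ℂ → ℝ≥0∞} {A B : ℝ≥0∞} (ht : 0 ≤ t)
    (hρ : Measurable ρ)
    (near : ∀ z, ∫⁻ v in Metric.closedBall z 1, ρ v * ‖z - v‖ₑ ^ (-1 - t) ≤ A)
    (far : ∀ z, ∫⁻ v in (Metric.closedBall z 1)ᶜ, ρ v * ‖z - v‖ₑ ^ (-1 + t) ≤ B) :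
    KatoBound t ρ (2 * (A + B)) := by
  refine ⟨hρ, fun z ↦ ?_⟩
  rw [← lintegral_add_compl _ (measurableSet_closedBall (x := z) (ε := 1)), mul_add]
  refine add_le_add ?_ ?_
  · refine le_trans ?_ (mul_le_mul_right (near z) 2)
    rw [← lintegral_const_mul _ (by fun_prop)]
    refine setLIntegral_mono (by fun_prop) fun v hv ↦ ?_
    have hzv : ‖z - v‖ₑ ≤ 1 := by
      rw [← ofReal_norm, ENNReal.ofReal_le_one]
      exact mem_closedBall_iff_norm'.1 hv
    rw [mul_left_comm, two_mul]
    gcongr ρ v * (_ + ?_)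
    exact ENNReal.rpow_le_rpow_of_exponent_ge hzv (by linarith)
  · refine le_trans ?_ (mul_le_mul_right (far z) 2)
    rw [← lintegral_const_mul _ (by fun_prop)]
    refine setLIntegral_mono (by fun_prop) fun v hv ↦ ?_
    have hzv : 1 ≤ ‖z - v‖ₑ := by
      rw [← ofReal_norm, ENNReal.one_le_ofReal]
      exact (not_le.1 (mt mem_closedBall_iff_norm'.2 hv)).le
    rw [mul_left_comm, two_mul]
    gcongr ρ v * (?_ + _)
    exact ENNReal.rpow_le_rpow_of_exponent_le hzv (by linarith)

theorem exists_katoBound {s : ℝ} (hs : 0 < s) (hs1 : s < 1) :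
    ∃ C : ℝ≥0, ∀ q : ℂ → ℂ, FourierInvertible q →
      KatoBound (s / 2) (fun v ↦ ‖q v‖ₑ) (C * HssNorm s q) := by
  obtain ⟨C₁, near⟩ := exists_lintegral_closedBall_mul_enorm_sub_rpow_le hs hs1
  obtain ⟨C₂, far⟩ := exists_lintegral_compl_closedBall_mul_enorm_sub_rpow_le hs hs1.le
  refine ⟨2 * (C₁ + C₂), fun q hq ↦ ?_⟩
  have hqm : Measurable q := hq.continuous.measurable
  convert KatoBound.of_closedBall_of_compl (half_pos hs).le hqm.enorm (near q hq) (far q hqm)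
    using 1
  push_cast
  ring

/-! ### The Lipschitz estimate -/

theorem HssNorm_const_mul (s : ℝ) (c : ℂ) (q : ℂ → ℂ) :
    HssNorm s (fun z ↦ c * q z) = ‖c‖ₑ * HssNorm s q := by
  have eLpNorm_const_mul (f : ℂ → ℂ) :
      eLpNorm (fun z ↦ c * f z) 2 volume = ‖c‖ₑ * eLpNorm f 2 volume :=
    eLpNorm_const_smul c f 2 volume
  simp only [HssNorm, FT_const_mul, mul_left_comm _ c, eLpNorm_const_mul, mul_max]

namespace KatoBound

variable {t : ℝ} {ρ ρ' : ℂ → ℝ≥0∞} {Λ Λ' : ℝ≥0∞}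

theorem mono (h : KatoBound t ρ Λ) (hΛ : Λ ≤ Λ') : KatoBound t ρ Λ' :=
  ⟨h.measurable, fun z ↦ (h.lintegral_le z).trans hΛ⟩

theorem add (h : KatoBound t ρ Λ) (h' : KatoBound t ρ' Λ') :
    KatoBound t (fun v ↦ ρ v + ρ' v) (Λ + Λ') := by
  have hρ := h.measurable
  refine ⟨hρ.add h'.measurable, fun z ↦ ?_⟩
  simp only [add_mul]
  rw [lintegral_add_left (by fun_prop)]
  exact add_le_add (h.lintegral_le z) (h'.lintegral_le z)

theorem potentialBound {Λ : ℝ≥0} (h : KatoBound t ρ Λ) (ht : 0 ≤ t) : PotentialBound ρ Λ := by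
  refine ⟨h.measurable, fun z ↦ (lintegral_mono fun v ↦ ?_).trans (h.lintegral_le z)⟩
  refine mul_le_mul_right ?_ _
  rw [← ENNReal.rpow_neg_one]
  rcases le_total ‖z - v‖ₑ 1 with hzv | hzv
  · exact (ENNReal.rpow_le_rpow_of_exponent_ge hzv (by linarith)).trans le_self_add
  · exact (ENNReal.rpow_le_rpow_of_exponent_le hzv (by linarith)).trans le_add_self

end KatoBound

theorem conj_modulated (k : ℂ) (q : ℂ → ℂ) :
    (fun w ↦ conj (modulated k q w)) = modulated (-k) fun w ↦ conj (q w) := by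
  funext w
  rw [modulated, map_mul, conj_ek, modulated]

theorem measurable_weightedNorm_dbarInv_modulated {ρ : ℂ → ℝ≥0∞} {q : ℂ → ℂ} (hρ : Measurable ρ)
    (hq : Measurable q) : Measurable fun k ↦ weightedNorm ρ (dbarInv (modulated k q)) := by
  have hX : Measurable fun x : ℂ × ℂ ↦ ‖dbarInv (modulated x.1 q) x.2‖ₑ :=
    (measurable_dbarInv_ek_mul hq).enorm
  have sq_root (k : ℂ) : weightedNorm ρ (dbarInv (modulated k q)) =
      (∫⁻ z, ρ z * ‖dbarInv (modulated k q) z‖ₑ ^ 2) ^ ((2 : ℕ) : ℝ)⁻¹ := by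
    rw [← weightedNorm_sq hρ (hX.comp (measurable_prodMk_left (x := k))),
      ENNReal.pow_rpow_inv_natCast two_ne_zero]
  simp only [sq_root]
  fun_prop

theorem measurable_scatteringSize_modulated {ρ : ℂ → ℝ≥0∞} {q : ℂ → ℂ} (hρ : Measurable ρ)
    (hq : Measurable q) : Measurable fun k ↦ scatteringSize ρ (modulated k q) := by
  simp only [scatteringSize, conj_modulated]
  exact (measurable_weightedNorm_dbarInv_modulated hρ hq).add
    ((measurable_weightedNorm_dbarInv_modulated hρ (by fun_prop)).comp measurable_neg)

theorem exists_lintegral_scatteringSize_pow_le {t : ℝ} (ht : 0 < t) (ht1 : t < 1) :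
    ∃ C : ℝ≥0, ∀ (q : ℂ → ℂ) (B : ℝ≥0), CauchyBound q B → ∀ ρ Λ, KatoBound t ρ Λ →
      ∫⁻ k, scatteringSize ρ (modulated k q) ^ 4 ≤ C * (∫⁻ v, ‖q v‖ₑ ^ 2) ^ 2 * Λ ^ 2 := by
  obtain ⟨C, hC⟩ := exists_lintegral_weightedNorm_dbarInv_pow_le ht ht1
  refine ⟨16 * C, fun q B hq ρ Λ hρ ↦ ?_⟩
  have hm := measurable_weightedNorm_dbarInv_modulated hρ.measurable hq.measurable
  have add_pow_four_le (x y : ℝ≥0∞) : (x + y) ^ 4 ≤ 8 * (x ^ 4 + y ^ 4) :=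
    calc (x + y) ^ 4 = ((x + y) ^ 2) ^ 2 := by ring
      _ ≤ (2 * (x ^ 2 + y ^ 2)) ^ 2 := pow_le_pow_left' (ennreal_add_sq_le x y) 2
      _ = 4 * (x ^ 2 + y ^ 2) ^ 2 := by ring
      _ ≤ 4 * (2 * ((x ^ 2) ^ 2 + (y ^ 2) ^ 2)) := mul_le_mul_right (ennreal_add_sq_le _ _) _
      _ = 8 * (x ^ 4 + y ^ 4) := by ring
  calc ∫⁻ k, scatteringSize ρ (modulated k q) ^ 4
      ≤ ∫⁻ k, 8 * (weightedNorm ρ (dbarInv (modulated k q)) ^ 4 +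
          weightedNorm ρ (dbarInv (modulated (-k) fun w ↦ conj (q w))) ^ 4) := by
        simp only [scatteringSize, conj_modulated]
        exact lintegral_mono fun k ↦ add_pow_four_le _ _
    _ = 8 * ((∫⁻ k, weightedNorm ρ (dbarInv (modulated k q)) ^ 4) +
          ∫⁻ k, weightedNorm ρ (dbarInv (modulated k fun w ↦ conj (q w))) ^ 4) := by
        rw [lintegral_const_mul' _ _ ENNReal.ofNat_ne_top, lintegral_add_left (hm.pow_const 4),
          lintegral_neg_eq_self
            fun k ↦ weightedNorm ρ (dbarInv (modulated k fun w ↦ conj (q w))) ^ 4]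
    _ ≤ 8 * (C * (∫⁻ v, ‖q v‖ₑ ^ 2) ^ 2 * Λ ^ 2 + C * (∫⁻ v, ‖q v‖ₑ ^ 2) ^ 2 * Λ ^ 2) := by
        refine mul_le_mul_right (add_le_add (hC q B hq ρ Λ hρ) ?_) _
        refine (hC _ B hq.conj_comp ρ Λ hρ).trans_eq ?_
        simp only [RCLike.enorm_conj]
    _ = (16 * C : ℝ≥0) * (∫⁻ v, ‖q v‖ₑ ^ 2) ^ 2 * Λ ^ 2 := by
        push_cast
        ring

theorem lintegral_enorm_scatTransform_sub_sq_le {ρ : ℂ → ℝ≥0∞} {Λ : ℝ≥0} {q₁ q₂ p : ℂ → ℂ} {D : ℝ}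
    {u₁ u₂ v₁ v₂ : ℂ → ℂ → ℂ} (h₁ : ∀ k, IsScattering q₁ k (u₁ · k) (u₂ · k))
    (h₂ : ∀ k, IsScattering q₂ k (v₁ · k) (v₂ · k)) (hρ : PotentialBound ρ Λ)
    (hq₁ : DominatedBy ρ q₁) (hq₂ : DominatedBy ρ q₂) (hp : DominatedBy ρ p) (hD : D ≠ 0)
    (hqp : ∀ z, q₂ z = q₁ z + D * p z) :
    ∫⁻ k, ‖scatTransform q₂ v₁ k - scatTransform q₁ u₁ k‖ₑ ^ 2 ≤
      ‖(D : ℂ)‖ₑ ^ 2 * (2 * ((∫⁻ k, ‖∫ z, modulated k p z‖ₑ ^ 2) + pairingBound Λ ^ 2 *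
        ((∫⁻ k, scatteringSize ρ (modulated k q₁) ^ 4) +
          (∫⁻ k, scatteringSize ρ (modulated k q₂) ^ 4) +
          ∫⁻ k, scatteringSize ρ (modulated k p) ^ 4))) := by
  set σ : (ℂ → ℂ) → ℂ → ℝ≥0∞ := fun q k ↦ scatteringSize ρ (modulated k q)
  have hσ {q : ℂ → ℂ} (hq : DominatedBy ρ q) : Measurable fun k ↦ σ q k ^ 4 :=
    (measurable_scatteringSize_modulated hρ.measurable hq.measurable).pow_const 4
  have hsum : Measurable fun k ↦ (pairingBound Λ : ℝ≥0∞) ^ 2 *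
      (σ q₁ k ^ 4 + σ q₂ k ^ 4 + σ p k ^ 4) :=
    (((hσ hq₁).add (hσ hq₂)).add (hσ hp)).const_mul _
  have max_pow_le (a b c : ℝ≥0∞) : max (max a b) c ^ 4 ≤ a ^ 4 + b ^ 4 + c ^ 4 := by
    rw [(pow_left_mono 4).map_max, (pow_left_mono 4).map_max]
    exact (max_le_add_of_nonneg zero_le zero_le).trans
      (add_le_add_left (max_le_add_of_nonneg zero_le zero_le) _)
  have pointwise (k : ℂ) : ‖scatTransform q₂ v₁ k - scatTransform q₁ u₁ k‖ₑ ^ 2 ≤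
      ‖(D : ℂ)‖ₑ ^ 2 * (2 * (‖∫ z, modulated k p z‖ₑ ^ 2 +
        pairingBound Λ ^ 2 * (σ q₁ k ^ 4 + σ q₂ k ^ 4 + σ p k ^ 4))) := by
    refine (pow_le_pow_left' (enorm_scatTransform_sub_le (h₁ k) (h₂ k) hρ hq₁ hq₂ hp hD hqp
      (S := max (max (σ q₁ k) (σ q₂ k)) (σ p k)) (le_max_of_le_left (le_max_left _ _))
      (le_max_of_le_left (le_max_right _ _)) (le_max_right _ _)) 2).trans ?_
    rw [mul_pow]
    refine mul_le_mul_right ((ennreal_add_sq_le _ _).trans ?_) _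
    rw [mul_pow, ← pow_mul]
    gcongr
    exact max_pow_le _ _ _
  refine (lintegral_mono pointwise).trans_eq ?_
  rw [lintegral_const_mul' _ _ (by finiteness), lintegral_const_mul' _ _ (by finiteness),
    lintegral_add_right _ hsum,
    lintegral_const_mul' _ _ (by finiteness), lintegral_add_right _ (hσ hp),
    lintegral_add_right _ (hσ hq₂)]

theorem exists_lintegral_enorm_scatTransform_sub_sq_le {s : ℝ} (hs : 0 < s) (hs1 : s < 1)
    (R : ℝ≥0) :
    ∃ C : ℝ≥0, ∀ (q₁ q₂ p : ℂ → ℂ) (u₁ u₂ v₁ v₂ : ℂ → ℂ → ℂ) (D : ℝ), FourierInvertible q₁ →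
      FourierInvertible q₂ → FourierInvertible p → HssNorm s q₁ ≤ R → HssNorm s q₂ ≤ R →
      HssNorm s p ≤ 1 → D ≠ 0 → (∀ z, q₂ z = q₁ z + D * p z) →
      (∀ k, IsScattering q₁ k (u₁ · k) (u₂ · k)) → (∀ k, IsScattering q₂ k (v₁ · k) (v₂ · k)) →
      ∫⁻ k, ‖scatTransform q₂ v₁ k - scatTransform q₁ u₁ k‖ₑ ^ 2 ≤ C * ‖(D : ℂ)‖ₑ ^ 2 := by
  obtain ⟨K, hK⟩ := exists_katoBound hs hs1
  obtain ⟨F, hF⟩ := exists_lintegral_scatteringSize_pow_le (half_pos hs) (by linarith)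
  set Λ : ℝ≥0 := K * R + K * R + K * 1
  set B : ℝ≥0 → ℝ≥0 := fun N ↦ F * (N ^ 2) ^ 2 * Λ ^ 2
  refine ⟨2 * (((2 * Real.pi) ^ 2).toNNReal * 1 ^ 2 + pairingBound Λ ^ 2 * (B R + B R + B 1)),
    fun q₁ q₂ p u₁ u₂ v₁ v₂ D hq₁ hq₂ hp hR₁ hR₂ hp1 hD hqp h₁ h₂ ↦ ?_⟩
  set ρ : ℂ → ℝ≥0∞ := fun v ↦ ‖q₁ v‖ₑ + ‖q₂ v‖ₑ + ‖p v‖ₑ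
  have kato : KatoBound (s / 2) ρ Λ := by
    simp only [Λ, ENNReal.coe_add, ENNReal.coe_mul, ENNReal.coe_one]
    exact (((hK q₁ hq₁).mono (mul_le_mul_right hR₁ _)).add
      ((hK q₂ hq₂).mono (mul_le_mul_right hR₂ _))).add ((hK p hp).mono (mul_le_mul_right hp1 _))
  have hρ : PotentialBound ρ Λ := kato.potentialBound (half_pos hs).le
  have dominated {q : ℂ → ℂ} (hq : FourierInvertible q) (h : ∀ v, ‖q v‖ₑ ≤ ρ v) :
      DominatedBy ρ q := ⟨hq.continuous.measurable, hq.integrable, h⟩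
  have hd₁ := dominated hq₁ fun v ↦ le_self_add.trans le_self_add
  have hd₂ := dominated hq₂ fun v ↦ le_add_self.trans le_self_add
  have hdp := dominated hp fun v ↦ le_add_self
  have size_le {q : ℂ → ℂ} {N : ℝ≥0} (hq : DominatedBy ρ q) (hN : HssNorm s q ≤ N) :
      ∫⁻ k, scatteringSize ρ (modulated k q) ^ 4 ≤ B N := by
    refine (hF q Λ (hρ.cauchyBound hq) ρ Λ kato).trans ?_
    have hL2 : ∫⁻ v, ‖q v‖ₑ ^ 2 ≤ N ^ 2 :=
      (lintegral_enorm_sq_le_HssNorm_sq q s).trans (pow_le_pow_left' hN 2)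
    simp only [B, ENNReal.coe_mul, ENNReal.coe_pow]
    gcongr
  have linear_part : ∫⁻ k, ‖∫ z, modulated k p z‖ₑ ^ 2 ≤ ((2 * Real.pi) ^ 2).toNNReal * 1 ^ 2 :=
    (lintegral_enorm_integral_ek_sq_le hp.integrable).trans (mul_le_mul_right
      ((lintegral_enorm_sq_le_HssNorm_sq p s).trans (pow_le_pow_left' hp1 2)) _)
  refine (lintegral_enorm_scatTransform_sub_sq_le h₁ h₂ hρ hd₁ hd₂ hdp hD hqp).trans ?_
  rw [mul_comm]
  push_cast
  gcongr
  exacts [size_le hd₁ hR₁, size_le hd₂ hR₂, size_le hdp hp1]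

theorem exists_eLpNorm_scatTransform_sub_le {s : ℝ} (hs : 0 < s) (hs1 : s < 1) (R : ℝ≥0) :
    ∃ C : ℝ≥0, ∀ (q₁ q₂ : ℂ → ℂ) (u₁ u₂ v₁ v₂ : ℂ → ℂ → ℂ) (D : ℝ≥0), D ≠ 0 →
      FourierInvertible q₁ → FourierInvertible q₂ → HssNorm s q₁ ≤ R → HssNorm s q₂ ≤ R →
      HssNorm s (fun z ↦ q₂ z - q₁ z) ≤ D → (∀ k, IsScattering q₁ k (u₁ · k) (u₂ · k)) →
      (∀ k, IsScattering q₂ k (v₁ · k) (v₂ · k)) →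
      eLpNorm (fun k ↦ scatTransform q₂ v₁ k - scatTransform q₁ u₁ k) 2 volume ≤ C * D := by
  obtain ⟨C, hC⟩ := exists_lintegral_enorm_scatTransform_sub_sq_le hs hs1 R
  refine ⟨((C : ℝ≥0∞) ^ (1 / 2 : ℝ)).toNNReal,
    fun q₁ q₂ u₁ u₂ v₁ v₂ D hD hq₁ hq₂ hR₁ hR₂ hqD h₁ h₂ ↦ ?_⟩
  have hDC : ((D : ℝ) : ℂ) ≠ 0 := by exact_mod_cast hD
  have enorm_D : ‖((D : ℝ) : ℂ)‖ₑ = D := by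
    rw [← ofReal_norm, Complex.norm_of_nonneg D.coe_nonneg, ENNReal.ofReal_coe_nnreal]
  set p : ℂ → ℂ := fun z ↦ ((D : ℝ) : ℂ)⁻¹ * (q₂ z - q₁ z)
  have hp1 : HssNorm s p ≤ 1 := by
    rw [HssNorm_const_mul, enorm_inv hDC, enorm_D,
      ENNReal.inv_mul_le_iff (by exact_mod_cast hD) ENNReal.coe_ne_top, mul_one]
    exact hqD
  rw [ENNReal.coe_toNNReal (by finiteness)]
  refine le_rpow_half_mul_of_sq_le ?_
  rw [eLpNorm_two_sq, ← enorm_D]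
  refine hC q₁ q₂ p u₁ u₂ v₁ v₂ D hq₁ hq₂ ((hq₂.sub hq₁).const_mul _) hR₁ hR₂ hp1
    (by exact_mod_cast hD) (fun z ↦ ?_) h₁ h₂
  rw [mul_inv_cancel_left₀ hDC, add_sub_cancel]

theorem stmt17_general {s : ℝ} (hs : s ∈ Set.Ioo (0 : ℝ) 1) (R : ℝ) :
    ∃ C : ℝ, 0 < C ∧ ∀ (q₁ q₂ : ℂ → ℂ) (u₁ u₂ v₁ v₂ : ℂ → ℂ → ℂ),
      FourierInvertible q₁ → FourierInvertible q₂ →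
      HssNorm s q₁ ≤ ENNReal.ofReal R → HssNorm s q₂ ≤ ENNReal.ofReal R →
      (∀ k, IsScattering q₁ k (u₁ · k) (u₂ · k)) → (∀ k, IsScattering q₂ k (v₁ · k) (v₂ · k)) →
      eLpNorm (fun k ↦ scatTransform q₂ v₁ k - scatTransform q₁ u₁ k) 2 volume ≤
        ENNReal.ofReal C * HssNorm s (fun z ↦ q₂ z - q₁ z) := by
  obtain ⟨C, hC⟩ := exists_eLpNorm_scatTransform_sub_le hs.1 hs.2 R.toNNReal
  refine ⟨(C + 1 : ℝ≥0), by positivity, fun q₁ q₂ u₁ u₂ v₁ v₂ hq₁ hq₂ hR₁ hR₂ h₁ h₂ ↦ ?_⟩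
  rw [ENNReal.ofReal_coe_nnreal, mul_comm, ← ENNReal.div_le_iff (by simp) ENNReal.coe_ne_top]
  refine le_of_forall_gt_imp_ge_of_dense fun D hD ↦ ?_
  cases D with
  | top => exact le_top
  | coe D =>
    rw [ENNReal.div_le_iff (by simp) ENNReal.coe_ne_top, mul_comm]
    have hD0 : D ≠ 0 := (ENNReal.coe_pos.1 hD.pos).ne'
    refine (hC q₁ q₂ u₁ u₂ v₁ v₂ D hD0 hq₁ hq₂ hR₁ hR₂ hD.le h₁ h₂).trans ?_
    gcongr
    exact le_self_add

end

/-- Theorem 3.4: local Lipschitz continuity of the scattering transform on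
`H^{s,s}`, `0 < s < 1`. -/
theorem stmt17 (s : ℝ) (hs : s ∈ Set.Ioo (0 : ℝ) 1) (R : ℝ) (hR : 0 < R) :
    ∃ C : ℝ, 0 < C ∧ ∀ (q₁ q₂ : 𝓢(ℂ, ℂ)) (u₁ u₂ v₁ v₂ : ℂ → ℂ → ℂ),
      HssNorm s (⇑q₁) ≤ ENNReal.ofReal R → HssNorm s (⇑q₂) ≤ ENNReal.ofReal R →
      (∀ k : ℂ, IsScattering (⇑q₁) k (fun z => u₁ z k) (fun z => u₂ z k)) →
      (∀ k : ℂ, IsScattering (⇑q₂) k (fun z => v₁ z k) (fun z => v₂ z k)) →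
      eLpNorm (fun k : ℂ => scatTransform (⇑q₂) v₁ k - scatTransform (⇑q₁) u₁ k) 2 volume ≤
        ENNReal.ofReal C * HssNorm s (fun z : ℂ => q₂ z - q₁ z) := by
  obtain ⟨C, hC, h⟩ := stmt17_general hs R
  exact ⟨C, hC, fun q₁ q₂ u₁ u₂ v₁ v₂ ↦
    h q₁ q₂ u₁ u₂ v₁ v₂ (.of_schwartzMap q₁) (.of_schwartzMap q₂)⟩
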